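/- arXiv:2202.09237 — 2 statements merged into one kernel-verified Lean document; each statement's English description precedes it below -/
import Mathlib

section
/- Let 1<s<2 and let Ω:ℝ→ℝ be C^∞, 2π-periodic with Ω(θ+π)=Ω(θ) for all θ. Then for every ξ∈ℝ²∖{0}, writing ξ=|ξ|·e_φ, the limit lim_{R→∞} ∫_{{x∈ℝ²:|x|≤R}} |x|^{−s}·Ω(θ(x))·e^{−2πi x·ξ} dx exists and equals |ξ|^{−2+s} · τ_{2−s} · ∫_{−π}^{π} |cos(φ−θ)|^{−2+s}·Ω(θ) dθ. -/
/-!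
In polar coordinates the truncated integral is an integral over the angle `θ` of `Ω θ` times the
radial integral `∫₀ᴿ r ^ (1 - s) exp (-2πi r |ξ| cos (φ - θ)) dr`. Since `Ω` is `π`-periodic and
`θ ↦ θ + π` conjugates the radial integral, only its real part contributes. Put `a = 2 - s`, which
lies in `(0, 1)`, and `k = 2π |ξ| |cos (φ - θ)|`; scaling turns the real part into
`k ^ (-a) * cosMoment a (k R)`, where `cosMoment a T = ∫₀ᵀ u ^ (a - 1) cos u du`.

Two facts then give the result. First, `cosMoment a T → Γ(a) cos (aπ/2)` as `T → ∞`
(`tendsto_cosMoment`); being continuous as well, `cosMoment a` is bounded on `[0, ∞)`. Secondly,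
`|cos| ^ (-a)` is integrable over a period because `a < 1` (`intervalIntegrable_abs_cos_rpow`).
Hence dominated convergence applies in `θ` (`tendsto_angular`).

For the cosine moment, an integration by parts rewrites `∫₀ᵀ u ^ (a - 1) e ^ (-z u) du` through the
kernel `u ^ (a - 2) (1 - e ^ (-z u)) / z`, which is absolutely integrable on `(0, ∞)` and is
dominated uniformly for `0 ≤ re z`, `1 ≤ ‖z‖`. For `0 < re z` the value is Euler's integral
`z ^ (-a) Γ(a)` (`gammaIntegral_eq`), and letting `z = ε - i → -i` gives the oscillatory integral.
-/

open MeasureTheory Real Filter Set Topology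
open scoped ENNReal

noncomputable section

namespace Aniso

/-- The Euclidean norm on `ℝ × ℝ`. -/
def nrm (x : ℝ × ℝ) : ℝ := Real.sqrt (x.1 ^ 2 + x.2 ^ 2)

/-- The angle `θ(x) ∈ [-π, π)` of a nonzero point `x ∈ ℝ²`,
so that `x / |x| = (cos (ang x), sin (ang x))`. -/
def ang (x : ℝ × ℝ) : ℝ :=
  if Complex.arg ⟨x.1, x.2⟩ = π then -π else Complex.arg ⟨x.1, x.2⟩

/-- The unit vector `e_φ = (cos φ, sin φ)`. -/
def eVec (φ : ℝ) : ℝ × ℝ := (Real.cos φ, Real.sin φ)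

/-- The constant `τ_s = (2π)^{-s} Γ(s) cos(sπ/2)`. -/
def tauC (s : ℝ) : ℝ := (2 * π) ^ (-s) * Real.Gamma s * Real.cos (s * π / 2)

/-- The constant `c_s = π^{s-1} Γ((2-s)/2) / Γ(s/2)`. -/
def cC (s : ℝ) : ℝ := π ^ (s - 1) * Real.Gamma ((2 - s) / 2) / Real.Gamma (s / 2)

/-- Hypothesis (H): `Ω` is smooth, 2π-periodic, strictly positive and π-periodic. -/
def SatisfiesH (Ω : ℝ → ℝ) : Prop :=
  ContDiff ℝ (⊤ : ℕ∞) Ω ∧ (∀ θ, Ω (θ + 2 * π) = Ω θ) ∧ (∀ θ, 0 < Ω θ) ∧ ∀ θ, Ω (θ + π) = Ω θ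

/-- Hypothesis (h): `ω` is smooth, 2π-periodic, nonnegative, not identically zero,
π-periodic, and `ω(π/2) = 0`. -/
def Satisfiesh (ω : ℝ → ℝ) : Prop :=
  ContDiff ℝ (⊤ : ℕ∞) ω ∧ (∀ θ, ω (θ + 2 * π) = ω θ) ∧ (∀ θ, 0 ≤ ω θ) ∧ (∃ θ, ω θ ≠ 0) ∧
    (∀ θ, ω (θ + π) = ω θ) ∧ ω (π / 2) = 0

/-- The transformed angle function `Ω̃`. -/
def Omt (s : ℝ) (Ω : ℝ → ℝ) (φ : ℝ) : ℝ :=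
  tauC (2 - s) * (∫ θ in (-π)..π, |Real.cos (φ - θ)| ^ (-2 + s) * (Ω θ - Ω (φ + π / 2)))
    + cC s * Ω (φ + π / 2)

/-- The interaction potential `W(x) = |x|^{-s} Ω(θ(x)) + |x|²` as an `[0,∞]`-valued
kernel, with `W(0) = ∞`. -/
def Wkernel (s : ℝ) (Ω : ℝ → ℝ) (x : ℝ × ℝ) : ℝ≥0∞ :=
  if x = 0 then ⊤ else ENNReal.ofReal (nrm x ^ (-s) * Ω (ang x) + nrm x ^ 2)

/-- The interaction energy `E[ρ] = (1/2) ∬ W(x-y) dρ(y) dρ(x) ∈ [0,∞]`. -/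
def energy (s : ℝ) (Ω : ℝ → ℝ) (ρ : Measure (ℝ × ℝ)) : ℝ≥0∞ :=
  (1 / 2 : ℝ≥0∞) * ∫⁻ x, ∫⁻ y, Wkernel s Ω (x - y) ∂ρ ∂ρ

/-- The real-valued interaction potential (with junk value `0` at the origin,
which is Lebesgue negligible). -/
def Wr (s : ℝ) (Ω : ℝ → ℝ) (x : ℝ × ℝ) : ℝ := nrm x ^ (-s) * Ω (ang x) + nrm x ^ 2

/-- `ρ` minimizes the energy `E` among probability measures on `ℝ²`. -/
def IsMinimizer (E : Measure (ℝ × ℝ) → ℝ≥0∞) (ρ : Measure (ℝ × ℝ)) : Prop :=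
  IsProbabilityMeasure ρ ∧ ∀ μ : Measure (ℝ × ℝ), IsProbabilityMeasure μ → E ρ ≤ E μ

/-- `ρ` is the unique minimizer of `E` up to translation: it is a minimizer and every
minimizer is a translate of it. -/
def IsUniqueMinimizer (E : Measure (ℝ × ℝ) → ℝ≥0∞) (ρ : Measure (ℝ × ℝ)) : Prop :=
  IsMinimizer E ρ ∧ ∀ μ, IsMinimizer E μ → ∃ v : ℝ × ℝ, μ = Measure.map (fun x => x + v) ρ

def R2 (s : ℝ) : ℝ := (8 * Real.sin (s * π / 2) / (s ^ 2 * (2 + s) * π)) ^ (-(1 / (s + 2)))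

def C2 (s : ℝ) : ℝ := 4 * Real.sin (s * π / 2) / (s ^ 2 * π ^ 2)

/-- The density `ρ₂(x) = C₂ (R₂² - |x|²)₊^{s/2}`. -/
def rho2 (s : ℝ) (x : ℝ × ℝ) : ℝ := C2 s * (max (R2 s ^ 2 - nrm x ^ 2) 0) ^ (s / 2)

def rho2meas (s : ℝ) : Measure (ℝ × ℝ) := volume.withDensity fun x => ENNReal.ofReal (rho2 s x)

/-- Counterclockwise rotation of `ℝ²` by the angle `η`. -/
def Rot (η : ℝ) (x : ℝ × ℝ) : ℝ × ℝ :=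
  (x.1 * Real.cos η - x.2 * Real.sin η, x.1 * Real.sin η + x.2 * Real.cos η)

/-- The measure `ρ_{a,b,η}`: the pushforward of `ρ₂(x) dx` under `x ↦ R_η (a x₁, b x₂)`. -/
def rhoE (s a b η : ℝ) : Measure (ℝ × ℝ) :=
  Measure.map (fun x => Rot η (a * x.1, b * x.2)) (rho2meas s)

/-- The measure `ρ_{a,b} = ρ_{a,b,0}`. -/
def rhoAB (s a b : ℝ) : Measure (ℝ × ℝ) := rhoE s a b 0

/-- The Beta function. -/
def BetaR (x y : ℝ) : ℝ := Real.Gamma x * Real.Gamma y / Real.Gamma (x + y)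

def C1 (s : ℝ) : ℝ := 2 * Real.cos (s * π / 2) / (s * (s + 1) * π)

def R1 (s : ℝ) : ℝ := (C1 s * BetaR (1 / 2) ((3 + s) / 2)) ^ (-(1 / (s + 2)))

/-- The density `ρ₁(t) = C₁ (R₁² - t²)₊^{(1+s)/2}` on `ℝ`. -/
def rho1 (s t : ℝ) : ℝ := C1 s * (max (R1 s ^ 2 - t ^ 2) 0) ^ ((1 + s) / 2)

def rho1meas (s : ℝ) : Measure ℝ := volume.withDensity fun t => ENNReal.ofReal (rho1 s t)

/-- The measure `ρ_{1D}`: the pushforward of `ρ₁(t) dt` under `t ↦ (0, t)`. -/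
def rho1D (s : ℝ) : Measure (ℝ × ℝ) := Measure.map (fun t : ℝ => ((0 : ℝ), t)) (rho1meas s)

/-- The support of a measure: points all of whose neighborhoods have positive measure. -/
def msupport {α : Type*} [TopologicalSpace α] [MeasurableSpace α] (μ : Measure α) : Set α :=
  {x | ∀ U ∈ 𝓝 x, 0 < μ U}

def Acoef (s : ℝ) (Ω : ℝ → ℝ) (a b : ℝ) : ℝ :=
  tauC s * (R1 s / R2 s) ^ (2 + s) *
    ∫ φ in (-π)..π,
      (a ^ 2 * Real.cos φ ^ 2 + b ^ 2 * Real.sin φ ^ 2) ^ (-(2 + s) / 2) *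
        Real.cos φ ^ 2 * Omt s Ω φ

def Bcoef (s : ℝ) (Ω : ℝ → ℝ) (a b : ℝ) : ℝ :=
  tauC s * (R1 s / R2 s) ^ (2 + s) *
    ∫ φ in (-π)..π,
      (a ^ 2 * Real.cos φ ^ 2 + b ^ 2 * Real.sin φ ^ 2) ^ (-(2 + s) / 2) *
        Real.sin φ ^ 2 * Omt s Ω φ

def Dcoef (s : ℝ) (Ω : ℝ → ℝ) (a b : ℝ) : ℝ :=
  tauC s * (R1 s / R2 s) ^ (2 + s) *
    ∫ φ in (-π)..π,
      (a ^ 2 * Real.cos φ ^ 2 + b ^ 2 * Real.sin φ ^ 2) ^ (-(2 + s) / 2) *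
        (Real.cos φ * Real.sin φ) * Omt s Ω φ

def Mfun (s : ℝ) (Ω : ℝ → ℝ) (a b : ℝ) : ℝ :=
  tauC s * (R1 s / R2 s) ^ (2 + s) *
    ∫ φ in (-π)..π, (a ^ 2 * Real.cos φ ^ 2 + b ^ 2 * Real.sin φ ^ 2) ^ (-s / 2) * Omt s Ω φ

def calE (s : ℝ) (Ω : ℝ → ℝ) (a b : ℝ) : ℝ := Mfun s Ω a b + s / 2 * (a ^ 2 + b ^ 2)

/-- A measure has compact support. -/
def HasCompactSupportM (ρ : Measure (ℝ × ℝ)) : Prop :=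
  ∃ K : Set (ℝ × ℝ), IsCompact K ∧ ρ Kᶜ = 0

/-- The linear interpolation `(1-t) ρ₀ + t ρ₁`. -/
def mix (ρ₀ ρ₁ : Measure (ℝ × ℝ)) (t : ℝ) : Measure (ℝ × ℝ) :=
  ENNReal.ofReal (1 - t) • ρ₀ + ENNReal.ofReal t • ρ₁

/-- Linear interpolation convexity (LIC): for any two distinct compactly supported
probability measures of finite energy with the same center of mass, the energy is
strictly convex along their linear interpolation. -/
def LIC (s : ℝ) (Ω : ℝ → ℝ) : Prop :=
  ∀ ρ₀ ρ₁ : Measure (ℝ × ℝ), IsProbabilityMeasure ρ₀ → IsProbabilityMeasure ρ₁ →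
    HasCompactSupportM ρ₀ → HasCompactSupportM ρ₁ →
    energy s Ω ρ₀ < ⊤ → energy s Ω ρ₁ < ⊤ → ρ₀ ≠ ρ₁ →
    (∫ x, x ∂ρ₀) = (∫ x, x ∂ρ₁) →
    StrictConvexOn ℝ (Set.Icc (0 : ℝ) 1) fun t => (energy s Ω (mix ρ₀ ρ₁ t)).toReal

/-- The interaction energy of a bounded compactly supported signed density. -/
def energyR (s : ℝ) (Ω : ℝ → ℝ) (μ : ℝ × ℝ → ℝ) : ℝ :=
  (1 / 2) * ∫ x : ℝ × ℝ, (∫ y : ℝ × ℝ, Wr s Ω (x - y) * μ y) * μ x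

/-- The logarithmic potential `W_log(x) = -ln|x| + Ω(θ(x)) + |x|²` (real valued,
with junk value at the origin). -/
def Wlog (Ω : ℝ → ℝ) (x : ℝ × ℝ) : ℝ := -Real.log (nrm x) + Ω (ang x) + nrm x ^ 2

def WlogKernel (Ω : ℝ → ℝ) (x : ℝ × ℝ) : ℝ≥0∞ :=
  if x = 0 then ⊤ else ENNReal.ofReal (Wlog Ω x)

/-- The logarithmic interaction energy. -/
def energyLog (Ω : ℝ → ℝ) (ρ : Measure (ℝ × ℝ)) : ℝ≥0∞ :=
  (1 / 2 : ℝ≥0∞) * ∫⁻ x, ∫⁻ y, WlogKernel Ω (x - y) ∂ρ ∂ρ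

/-- The family `W_{(s)}(x) = |x|^{-s} (1/s + Ω(θ(x))) - 1/s + |x|²`. -/
def Wsfam (s : ℝ) (Ω : ℝ → ℝ) (x : ℝ × ℝ) : ℝ :=
  nrm x ^ (-s) * (1 / s + Ω (ang x)) - 1 / s + nrm x ^ 2

/-- The transformed angle function of `W_{(s)}`. -/
def Omts (s : ℝ) (Ω : ℝ → ℝ) (φ : ℝ) : ℝ :=
  tauC (2 - s) * (∫ θ in (-π)..π, |Real.cos (φ - θ)| ^ (-2 + s) * (Ω θ - Ω (φ + π / 2)))
    + cC s * (1 / s + Ω (φ + π / 2))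

/-- The truncated integral appearing in the principal value defining `Ω̃_log`. -/
def pvInt (Ω : ℝ → ℝ) (φ δ : ℝ) : ℝ :=
  ∫ θ in {θ : ℝ | θ ∈ Set.Icc (-π) π ∧ δ ≤ |Real.cos (φ - θ)|},
    |Real.cos (φ - θ)| ^ (-(2 : ℝ)) * (Ω θ - Ω (φ + π / 2))

def OmtLogFam (Ω : ℝ → ℝ) (φ δ : ℝ) : ℝ :=
  -((2 * π) ^ (-(2 : ℝ))) * pvInt Ω φ δ + (2 * π)⁻¹

/-- The transformed angle function `Ω̃_log`, defined as the principal value limit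
(via `limUnder`, which returns the limit whenever it exists). -/
def OmtLog (Ω : ℝ → ℝ) (φ : ℝ) : ℝ := limUnder (𝓝[>] (0 : ℝ)) (OmtLogFam Ω φ)

/-- The closed elliptical region `B(0; a, b)`. -/
def ellipseSet (a b : ℝ) : Set (ℝ × ℝ) := {x | x.1 ^ 2 / a ^ 2 + x.2 ^ 2 / b ^ 2 ≤ 1}

def ALog (Ω : ℝ → ℝ) (a b : ℝ) : ℝ :=
  ∫ φ in (-π)..π,
    (a ^ 2 * Real.cos φ ^ 2 + b ^ 2 * Real.sin φ ^ 2)⁻¹ * Real.cos φ ^ 2 * OmtLog Ω φ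

def BLog (Ω : ℝ → ℝ) (a b : ℝ) : ℝ :=
  ∫ φ in (-π)..π,
    (a ^ 2 * Real.cos φ ^ 2 + b ^ 2 * Real.sin φ ^ 2)⁻¹ * Real.sin φ ^ 2 * OmtLog Ω φ

def DLog (Ω : ℝ → ℝ) (a b : ℝ) : ℝ :=
  ∫ φ in (-π)..π,
    (a ^ 2 * Real.cos φ ^ 2 + b ^ 2 * Real.sin φ ^ 2)⁻¹ *
      (Real.cos φ * Real.sin φ) * OmtLog Ω φ

/-- The uniform probability measure on the rotated ellipse `B(0; a, b, η)`. -/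
def unifEllipse (a b η : ℝ) : Measure (ℝ × ℝ) :=
  volume.withDensity ((Rot η '' ellipseSet a b).indicator fun _ => ENNReal.ofReal ((π * a * b)⁻¹))

/-- The pushforward of the density `(2/(πb²)) (b² - t²)₊^{1/2} dt` under `t ↦ R_η (0, t)`. -/
def semicirc (b η : ℝ) : Measure (ℝ × ℝ) :=
  Measure.map (fun t : ℝ => Rot η (0, t))
    (volume.withDensity fun t =>
      ENNReal.ofReal (2 / (π * b ^ 2) * (max (b ^ 2 - t ^ 2) 0) ^ ((1 : ℝ) / 2)))

/-- The vertical semicircle measure `ρ_{1D}` for the logarithmic case. -/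
def rho1Dlog : Measure (ℝ × ℝ) :=
  Measure.map (fun t : ℝ => ((0 : ℝ), t))
    (volume.withDensity fun t => ENNReal.ofReal (2 / π * (max (1 - t ^ 2) 0) ^ ((1 : ℝ) / 2)))

/-- The measure `ψ(t) dt` placed on the vertical axis. -/
def rhoPsi (ψ : ℝ → ℝ) : Measure (ℝ × ℝ) :=
  Measure.map (fun t : ℝ => ((0 : ℝ), t)) (volume.withDensity fun t => ENNReal.ofReal (ψ t))


/-! ### Euler's integral and the truncated cosine moment -/

/-- The integrand left after integrating `u ^ (a - 1) * exp (-z u)` by parts, using the primitive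
of `exp (-z u)` that vanishes at the origin. It is absolutely integrable on `(0, ∞)` as soon as
`0 ≤ re z`, `z ≠ 0` and `0 < a < 1`. -/
def ibpKernel (a : ℝ) (z : ℂ) (u : ℝ) : ℂ :=
  ((u ^ (a - 2) : ℝ) : ℂ) * ((1 - Complex.exp (-z * u)) / z)

lemma norm_exp_le_one {z : ℂ} (hz : 0 ≤ z.re) {u : ℝ} (hu : 0 ≤ u) :
    ‖Complex.exp (-z * u)‖ ≤ 1 := by
  rw [Complex.norm_exp, Real.exp_le_one_iff]
  have : 0 ≤ z.re * u := by positivity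
  simpa using this

lemma norm_one_sub_exp_le {z : ℂ} (hz : 0 ≤ z.re) {u : ℝ} (hu : 0 ≤ u) :
    ‖1 - Complex.exp (-z * u)‖ ≤ 2 ∧ ‖1 - Complex.exp (-z * u)‖ ≤ 2 * (‖z‖ * u) := by
  have h2 : ‖1 - Complex.exp (-z * u)‖ ≤ 2 := by
    refine (norm_sub_le _ _).trans ?_
    have := norm_exp_le_one hz hu
    rw [norm_one]; linarith
  refine ⟨h2, ?_⟩
  have hn : ‖-z * u‖ = ‖z‖ * u := by
    rw [norm_mul, norm_neg, Complex.norm_real, Real.norm_of_nonneg hu]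
  by_cases h : ‖z‖ * u ≤ 1
  · rw [norm_sub_rev, ← hn]
    exact Complex.norm_exp_sub_one_le (by rw [hn]; exact h)
  · linarith

lemma norm_primitive_le {z : ℂ} (hz : 0 ≤ z.re) (hz1 : 1 ≤ ‖z‖) {u : ℝ} (hu : 0 ≤ u) :
    ‖(1 - Complex.exp (-z * u)) / z‖ ≤ 2 * min u 1 := by
  obtain ⟨h1, h2⟩ := norm_one_sub_exp_le hz hu
  rw [norm_div, div_le_iff₀ (by linarith)]
  rcases le_total u 1 with h | h
  · rw [min_eq_left h]; linarith
  · rw [min_eq_right h]; linarith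

lemma norm_ibpKernel_le (a : ℝ) {z : ℂ} (hz : 0 ≤ z.re) (hz1 : 1 ≤ ‖z‖) {u : ℝ} (hu : 0 < u) :
    ‖ibpKernel a z u‖ ≤ u ^ (a - 2) * (2 * min u 1) := by
  rw [ibpKernel, norm_mul, Complex.norm_real, Real.norm_of_nonneg (by positivity)]
  exact mul_le_mul_of_nonneg_left (norm_primitive_le hz hz1 hu.le) (by positivity)

lemma integrableOn_bound {a : ℝ} (ha0 : 0 < a) (ha1 : a < 1) :
    IntegrableOn (fun u : ℝ => u ^ (a - 2) * (2 * min u 1)) (Ioi 0) := by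
  rw [← Ioc_union_Ioi_eq_Ioi zero_le_one]
  refine IntegrableOn.union ?_ ?_
  · have h : IntegrableOn (fun u : ℝ => u ^ (a - 1) * 2) (Ioc 0 1) := by
      have := (intervalIntegral.intervalIntegrable_rpow' (a := 0) (b := 1)
        (r := a - 1) (by linarith)).mul_const 2
      rwa [intervalIntegrable_iff_integrableOn_Ioc_of_le zero_le_one] at this
    refine h.congr_fun ?_ measurableSet_Ioc
    intro u hu
    have : u ^ (a - 1) = u ^ (a - 2) * u := by
      rw [← Real.rpow_add_one hu.1.ne']; ring_nf
    simp only [min_eq_left hu.2, this]; ring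
  · have h := (integrableOn_Ioi_rpow_of_lt (a := a - 2) (by linarith) zero_lt_one).mul_const 2
    refine IntegrableOn.congr_fun h ?_ measurableSet_Ioi
    intro u hu
    simp only [min_eq_right (le_of_lt (mem_Ioi.1 hu)), mul_one]

lemma aestronglyMeasurable_ibpKernel (a : ℝ) (z : ℂ) (μ : Measure ℝ) :
    AEStronglyMeasurable (ibpKernel a z) μ := by
  unfold ibpKernel
  exact Measurable.aestronglyMeasurable (by fun_prop)

lemma integrableOn_ibpKernel {a : ℝ} (ha0 : 0 < a) (ha1 : a < 1) {z : ℂ} (hz : 0 ≤ z.re)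
    (hz1 : 1 ≤ ‖z‖) : IntegrableOn (ibpKernel a z) (Ioi 0) := by
  refine (integrableOn_bound ha0 ha1).mono' (aestronglyMeasurable_ibpKernel _ _ _) ?_
  filter_upwards [ae_restrict_mem measurableSet_Ioi] with u hu
  exact norm_ibpKernel_le a hz hz1 hu

lemma intervalIntegrable_rpow_mul_exp {a : ℝ} (ha0 : 0 < a) (z : ℂ) (A B : ℝ) :
    IntervalIntegrable (fun u : ℝ => ((u ^ (a - 1) : ℝ) : ℂ) * Complex.exp (-z * u))
      volume A B := by
  have h : IntervalIntegrable (fun u : ℝ => ((u ^ (a - 1) : ℝ) : ℂ)) volume A B :=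
    have h := intervalIntegral.intervalIntegrable_rpow' (a := A) (b := B) (r := a - 1)
      (by linarith)
    ⟨h.1.ofReal, h.2.ofReal⟩
  exact h.mul_continuousOn (by fun_prop)

lemma norm_boundary_le (a : ℝ) {z : ℂ} (hz : 0 ≤ z.re) (hz1 : 1 ≤ ‖z‖) {u : ℝ}
    (hu : 0 < u) :
    ‖((u ^ (a - 1) : ℝ) : ℂ) * ((1 - Complex.exp (-z * u)) / z)‖
      ≤ u ^ (a - 1) * (2 * min u 1) := by
  rw [norm_mul, Complex.norm_real, Real.norm_of_nonneg (by positivity)]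
  exact mul_le_mul_of_nonneg_left (norm_primitive_le hz hz1 hu.le) (by positivity)

/-- Integration by parts on `(0, T)`; the boundary term at the origin is `O(u ^ a)`. -/
lemma integral_rpow_mul_exp_eq {a : ℝ} (ha0 : 0 < a) (ha1 : a < 1) {z : ℂ} (hz : 0 ≤ z.re)
    (hz1 : 1 ≤ ‖z‖) {T : ℝ} (hT : 0 < T) :
    ∫ u in (0 : ℝ)..T, ((u ^ (a - 1) : ℝ) : ℂ) * Complex.exp (-z * u) =
      ((T ^ (a - 1) : ℝ) : ℂ) * ((1 - Complex.exp (-z * T)) / z)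
        + (1 - a) * ∫ u in (0 : ℝ)..T, ibpKernel a z u := by
  have hz0 : z ≠ 0 := by rintro rfl; norm_num at hz1
  have hK : IntervalIntegrable (ibpKernel a z) volume 0 T := by
    rw [intervalIntegrable_iff_integrableOn_Ioc_of_le hT.le]
    exact (integrableOn_ibpKernel ha0 ha1 hz hz1).mono_set Ioc_subset_Ioi_self
  have hE := intervalIntegrable_rpow_mul_exp ha0 z 0 T
  let g : ℝ → ℂ := fun u => ((u ^ (a - 1) : ℝ) : ℂ) * ((1 - Complex.exp (-z * u)) / z)
  have hder : ∀ u : ℝ, 0 < u → HasDerivAt g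
      (((u ^ (a - 1) : ℝ) : ℂ) * Complex.exp (-z * u) - (1 - a) * ibpKernel a z u) u := by
    intro u hu
    have h1 : HasDerivAt (fun u : ℝ => ((u ^ (a - 1) : ℝ) : ℂ))
        (((a - 1) * u ^ (a - 1 - 1) : ℝ) : ℂ) u :=
      (Real.hasDerivAt_rpow_const (Or.inl hu.ne')).ofReal_comp
    have h2 : HasDerivAt (fun u : ℝ => -z * (u : ℂ)) (-z * 1) u :=
      (Complex.ofRealCLM.hasDerivAt (x := u)).const_mul (-z)
    have h3 := ((h2.cexp.const_sub 1).div_const z)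
    have h4 := h1.mul h3
    refine h4.congr_deriv ?_
    rw [ibpKernel, show a - 1 - 1 = a - 2 by ring]
    push_cast
    field_simp
    ring
  have hl : Tendsto g (𝓝[>] 0) (𝓝 0) := by
    have hb : Tendsto (fun u : ℝ => 2 * u ^ a) (𝓝[>] 0) (𝓝 0) := by
      have : Tendsto (fun u : ℝ => 2 * u ^ a) (𝓝 0) (𝓝 (2 * 0 ^ a)) :=
        ((Real.continuousAt_rpow_const 0 a (Or.inr ha0.le)).tendsto).const_mul 2
      rw [Real.zero_rpow ha0.ne', mul_zero] at this
      exact this.mono_left nhdsWithin_le_nhds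
    refine squeeze_zero_norm' ?_ hb
    filter_upwards [self_mem_nhdsWithin] with u hu
    have hu : 0 < u := hu
    refine (norm_boundary_le a hz hz1 hu).trans ?_
    have : u ^ a = u ^ (a - 1) * u := by
      rw [← Real.rpow_add_one hu.ne']; ring_nf
    rw [this]
    have h5 : 0 ≤ u ^ (a - 1) := by positivity
    nlinarith [min_le_left u 1]
  have hr : Tendsto g (𝓝[<] T) (𝓝 (g T)) :=
    (hder T hT).continuousAt.tendsto.mono_left nhdsWithin_le_nhds
  have key := intervalIntegral.integral_eq_sub_of_hasDerivAt_of_tendsto hT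
    (fun u hu => hder u hu.1) (hE.sub (hK.const_mul _)) hl hr
  rw [intervalIntegral.integral_sub hE (hK.const_mul _), intervalIntegral.integral_const_mul] at key
  linear_combination key

lemma tendsto_integral_rpow_mul_exp {a : ℝ} (ha0 : 0 < a) (ha1 : a < 1) {z : ℂ}
    (hz : 0 ≤ z.re) (hz1 : 1 ≤ ‖z‖) :
    Tendsto (fun T : ℝ => ∫ u in (0 : ℝ)..T, ((u ^ (a - 1) : ℝ) : ℂ) * Complex.exp (-z * u))
      atTop (𝓝 ((1 - a) * ∫ u in Ioi (0 : ℝ), ibpKernel a z u)) := by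
  have h1 : Tendsto (fun T : ℝ => ((T ^ (a - 1) : ℝ) : ℂ) * ((1 - Complex.exp (-z * T)) / z))
      atTop (𝓝 0) := by
    have hb : Tendsto (fun u : ℝ => u ^ (a - 1) * 2) atTop (𝓝 0) := by
      have := (tendsto_rpow_neg_atTop (y := 1 - a) (by linarith)).mul_const 2
      simpa using this
    refine squeeze_zero_norm' ?_ hb
    filter_upwards [eventually_gt_atTop 0] with u hu
    refine (norm_boundary_le a hz hz1 hu).trans ?_
    have h5 : 0 ≤ u ^ (a - 1) := by positivity
    nlinarith [min_le_right u 1]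
  have h2 := intervalIntegral_tendsto_integral_Ioi 0 (integrableOn_ibpKernel ha0 ha1 hz hz1)
    (tendsto_id (α := ℝ) (x := atTop))
  have h3 := h1.add (h2.const_mul (1 - a : ℂ))
  rw [zero_add] at h3
  refine h3.congr' ?_
  filter_upwards [eventually_gt_atTop 0] with T hT
  exact (integral_rpow_mul_exp_eq ha0 ha1 hz hz1 hT).symm

lemma integrableOn_rpow_mul_exp_re {p : ℝ} (hp : -1 < p) {b : ℝ} (hb : 0 < b) :
    IntegrableOn (fun u : ℝ => u ^ p * Real.exp (-b * u)) (Ioi 0) := by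
  simpa using integrableOn_rpow_mul_exp_neg_mul_rpow (p := 1) hp one_pos hb

lemma integrableOn_rpow_mul_exp {a : ℝ} (ha0 : 0 < a) {z : ℂ} (hz : 0 < z.re) :
    IntegrableOn (fun u : ℝ => ((u ^ (a - 1) : ℝ) : ℂ) * Complex.exp (-z * u)) (Ioi 0) := by
  refine (integrableOn_rpow_mul_exp_re (p := a - 1) (by linarith) hz).mono'
    (Measurable.aestronglyMeasurable (by fun_prop)) ?_
  filter_upwards [ae_restrict_mem measurableSet_Ioi] with u hu
  have hu : 0 < u := hu
  rw [norm_mul, Complex.norm_real, Real.norm_of_nonneg (by positivity), Complex.norm_exp]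
  simp

lemma differentiableAt_gammaIntegral {a : ℝ} (ha0 : 0 < a) {z₀ : ℂ} (hz : 0 < z₀.re) :
    DifferentiableAt ℂ
      (fun z : ℂ => ∫ u in Ioi (0 : ℝ), ((u ^ (a - 1) : ℝ) : ℂ) * Complex.exp (-z * u)) z₀ := by
  have hb : 0 < z₀.re / 2 := by linarith
  have hball : ∀ z ∈ Metric.ball z₀ (z₀.re / 2), z₀.re / 2 ≤ z.re := by
    intro z hz'
    rw [Metric.mem_ball, dist_eq_norm] at hz'
    have := (Complex.abs_re_le_norm (z - z₀)).trans hz'.le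
    rw [Complex.sub_re] at this
    linarith [(abs_le.1 this).1]
  refine (hasDerivAt_integral_of_dominated_loc_of_deriv_le (μ := volume.restrict (Ioi 0))
    (F := fun z (u : ℝ) => ((u ^ (a - 1) : ℝ) : ℂ) * Complex.exp (-z * u))
    (F' := fun z (u : ℝ) => ((u ^ (a - 1) : ℝ) : ℂ) * (Complex.exp (-z * u) * (-1 * u)))
    (bound := fun u => u ^ a * Real.exp (-(z₀.re / 2) * u))
    (Metric.ball_mem_nhds z₀ hb) ?_ (integrableOn_rpow_mul_exp ha0 hz) ?_ ?_
    (integrableOn_rpow_mul_exp_re (by linarith) hb) ?_).2.differentiableAt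
  · exact Eventually.of_forall fun z => Measurable.aestronglyMeasurable (by fun_prop)
  · exact Measurable.aestronglyMeasurable (by fun_prop)
  · filter_upwards [ae_restrict_mem measurableSet_Ioi] with u hu z hz'
    have hu : 0 < u := hu
    have h1 : u ^ a = u ^ (a - 1) * u := by
      rw [← Real.rpow_add_one hu.ne']; ring_nf
    rw [norm_mul, norm_mul, Complex.norm_real, Real.norm_of_nonneg (by positivity),
      Complex.norm_exp, h1]
    have h2 : ‖(-1 : ℂ) * (u : ℂ)‖ = u := by simp [abs_of_pos hu]
    have h3 : Real.exp (-z * u : ℂ).re ≤ Real.exp (-(z₀.re / 2) * u) := by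
      rw [Real.exp_le_exp]
      have := mul_le_mul_of_nonneg_right (hball z hz') hu.le
      simp only [neg_mul, Complex.neg_re, Complex.re_mul_ofReal]
      linarith
    rw [h2, mul_assoc, mul_comm u]
    gcongr
  · refine Eventually.of_forall fun u z _ => ?_
    have h2 : HasDerivAt (fun z : ℂ => -z * (u : ℂ)) (-1 * u) z :=
      (hasDerivAt_id z).neg.mul_const (u : ℂ)
    exact h2.cexp.const_mul _

/-- Euler's integral `∫₀^∞ u ^ (a - 1) e ^ (-z u) du = z ^ (-a) Γ(a)` for complex `z` in the right
half-plane: both sides are holomorphic there and they agree on the positive real axis. -/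
lemma gammaIntegral_eq {a : ℝ} (ha0 : 0 < a) {z : ℂ} (hz : 0 < z.re) :
    ∫ u in Ioi (0 : ℝ), ((u ^ (a - 1) : ℝ) : ℂ) * Complex.exp (-z * u)
      = (1 / z) ^ (a : ℂ) * Complex.Gamma a := by
  let U : Set ℂ := {z | 0 < z.re}
  have hUo : IsOpen U := isOpen_lt continuous_const Complex.continuous_re
  have hUc : IsPreconnected U := (convex_halfSpace_re_gt 0).isPreconnected
  have hf : AnalyticOnNhd ℂ (fun z : ℂ => ∫ u in Ioi (0 : ℝ),
      ((u ^ (a - 1) : ℝ) : ℂ) * Complex.exp (-z * u)) U :=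
    DifferentiableOn.analyticOnNhd
      (fun z hz => (differentiableAt_gammaIntegral ha0 hz).differentiableWithinAt) hUo
  have hg : AnalyticOnNhd ℂ (fun z : ℂ => (1 / z) ^ (a : ℂ) * Complex.Gamma a) U := by
    refine DifferentiableOn.analyticOnNhd (fun z hz => ?_) hUo
    have hz : 0 < z.re := hz
    have hz0 : z ≠ 0 := by rintro rfl; simp at hz
    have hs : 1 / z ∈ Complex.slitPlane := by
      left
      rw [one_div, Complex.inv_re]
      exact div_pos hz (Complex.normSq_pos.2 hz0)
    have h1 : DifferentiableAt ℂ (fun z : ℂ => 1 / z) z :=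
      (differentiableAt_const _).div differentiableAt_id hz0
    exact ((h1.cpow (differentiableAt_const _) hs).mul_const _).differentiableWithinAt
  refine hf.eqOn_of_preconnected_of_frequently_eq hg hUc (z₀ := 1) (by simp [U]) ?_ hz
  have ht : Tendsto (fun t : ℝ => (t : ℂ)) (𝓝[≠] 1) (𝓝[≠] 1) := by
    refine tendsto_nhdsWithin_iff.2 ⟨?_, ?_⟩
    · exact ((Complex.continuous_ofReal.tendsto 1).mono_left nhdsWithin_le_nhds).trans
        (by simp)
    · filter_upwards [self_mem_nhdsWithin] with t ht
      simpa using ht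
  refine ht.frequently (Eventually.frequently ?_)
  filter_upwards [nhdsWithin_le_nhds (lt_mem_nhds (zero_lt_one (α := ℝ)))] with t ht
  rw [← Complex.integral_cpow_mul_exp_neg_mul_Ioi (a := (a : ℂ)) (by simpa using ha0) ht]
  refine setIntegral_congr_fun measurableSet_Ioi fun u hu => ?_
  have hu : 0 < u := hu
  simp only [Complex.ofReal_cpow hu.le, neg_mul]
  push_cast
  rfl

lemma integral_ibpKernel_of_re_pos {a : ℝ} (ha0 : 0 < a) (ha1 : a < 1) {z : ℂ}
    (hz : 0 < z.re) (hz1 : 1 ≤ ‖z‖) :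
    (1 - a) * ∫ u in Ioi (0 : ℝ), ibpKernel a z u = (1 / z) ^ (a : ℂ) * Complex.Gamma a := by
  rw [← gammaIntegral_eq ha0 hz]
  exact tendsto_nhds_unique (tendsto_integral_rpow_mul_exp ha0 ha1 hz.le hz1)
    (intervalIntegral_tendsto_integral_Ioi 0 (integrableOn_rpow_mul_exp ha0 hz)
      (tendsto_id (α := ℝ) (x := atTop)))

/-- The identity `integral_ibpKernel_of_re_pos` persists at the boundary point `z = -i`, by
dominated convergence along `z = ε - i`, `ε → 0⁺`. -/
lemma integral_ibpKernel_neg_I {a : ℝ} (ha0 : 0 < a) (ha1 : a < 1) :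
    (1 - a) * ∫ u in Ioi (0 : ℝ), ibpKernel a (-Complex.I) u
      = Complex.I ^ (a : ℂ) * Complex.Gamma a := by
  let z : ℝ → ℂ := fun ε => ε - Complex.I
  have hzre : ∀ ε, (z ε).re = ε := fun ε => by simp [z]
  have hz1 : ∀ ε, 1 ≤ ‖z ε‖ := fun ε => by
    have := Complex.abs_im_le_norm (z ε)
    simpa [z] using this
  have hz0 : ∀ ε, z ε ≠ 0 := fun ε h => by
    have := hz1 ε
    rw [h] at this; norm_num at this
  have hzc : Continuous z := by fun_prop
  have hz00 : z 0 = -Complex.I := by simp [z]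
  have hL : Tendsto (fun ε : ℝ => ∫ u in Ioi (0 : ℝ), ibpKernel a (z ε) u) (𝓝[>] 0)
      (𝓝 (∫ u in Ioi (0 : ℝ), ibpKernel a (z 0) u)) := by
    refine tendsto_integral_filter_of_dominated_convergence
      (fun u : ℝ => u ^ (a - 2) * (2 * min u 1)) ?_ ?_ (integrableOn_bound ha0 ha1) ?_
    · exact Eventually.of_forall fun ε => aestronglyMeasurable_ibpKernel _ _ _
    · filter_upwards [self_mem_nhdsWithin] with ε hε
      filter_upwards [ae_restrict_mem measurableSet_Ioi] with u hu
      have hε : 0 < ε := hε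
      exact norm_ibpKernel_le a (by rw [hzre]; exact hε.le) (hz1 ε) hu
    · refine Eventually.of_forall fun u => ?_
      have : Continuous fun ε => ibpKernel a (z ε) u := by
        unfold ibpKernel
        exact continuous_const.mul (Continuous.div (by fun_prop) hzc hz0)
      exact (this.tendsto 0).mono_left nhdsWithin_le_nhds
  have hR : Tendsto (fun ε : ℝ => (1 / z ε) ^ (a : ℂ) * Complex.Gamma a) (𝓝[>] 0)
      (𝓝 ((1 / z 0) ^ (a : ℂ) * Complex.Gamma a)) := by
    have h1 : ContinuousAt (fun ε => 1 / z ε) 0 :=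
      ContinuousAt.div continuousAt_const hzc.continuousAt (hz0 0)
    have h2 : ContinuousAt (fun ε => (1 / z ε) ^ (a : ℂ)) 0 := by
      refine h1.cpow continuousAt_const ?_
      rw [hz00]
      simp [Complex.slitPlane]
    exact (h2.tendsto.mul_const _).mono_left nhdsWithin_le_nhds
  have hE := (hL.const_mul (1 - a : ℂ)).congr' (f₂ := fun ε : ℝ =>
      (1 / z ε) ^ (a : ℂ) * Complex.Gamma a) (by
    filter_upwards [self_mem_nhdsWithin] with ε hε
    have hε : 0 < ε := hε
    exact integral_ibpKernel_of_re_pos ha0 ha1 (by rw [hzre]; exact hε) (hz1 ε))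
  have := tendsto_nhds_unique hE hR
  rw [hz00] at this
  rw [this]
  simp

/-- The truncated cosine moment `∫₀ᵀ u ^ (a - 1) cos u du`. -/
def cosMoment (a T : ℝ) : ℝ := ∫ u in (0 : ℝ)..T, u ^ (a - 1) * Real.cos u

lemma re_integral_eq_cosMoment {a : ℝ} (ha0 : 0 < a) (T : ℝ) :
    (∫ u in (0 : ℝ)..T, ((u ^ (a - 1) : ℝ) : ℂ) * Complex.exp (-(-Complex.I) * u)).re
      = cosMoment a T := by
  have h := Complex.reCLM.intervalIntegral_comp_comm
    (intervalIntegrable_rpow_mul_exp ha0 (-Complex.I) 0 T)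
  simp only [Complex.reCLM_apply] at h
  rw [← h, cosMoment]
  refine intervalIntegral.integral_congr fun u _ => ?_
  simp only [Complex.re_ofReal_mul, neg_neg]
  rw [mul_comm Complex.I, Complex.exp_ofReal_mul_I_re]

lemma tendsto_cosMoment {a : ℝ} (ha0 : 0 < a) (ha1 : a < 1) :
    Tendsto (cosMoment a) atTop (𝓝 (Real.Gamma a * Real.cos (a * π / 2))) := by
  have h := tendsto_integral_rpow_mul_exp ha0 ha1 (z := -Complex.I) (by simp) (by simp)
  rw [integral_ibpKernel_neg_I ha0 ha1] at h
  have h2 := (Complex.continuous_re.tendsto _).comp h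
  have h3 : (Complex.I ^ (a : ℂ) * Complex.Gamma a).re
      = Real.Gamma a * Real.cos (a * π / 2) := by
    rw [Complex.Gamma_ofReal, mul_comm, Complex.re_ofReal_mul,
      Complex.cpow_def_of_ne_zero Complex.I_ne_zero, Complex.log_I,
      show (π : ℂ) / 2 * Complex.I * (a : ℂ) = ((a * π / 2 : ℝ) : ℂ) * Complex.I by
        push_cast; ring, Complex.exp_ofReal_mul_I_re]
  rw [h3] at h2
  refine h2.congr fun T => ?_
  exact re_integral_eq_cosMoment ha0 T

lemma continuous_cosMoment {a : ℝ} (ha0 : 0 < a) : Continuous (cosMoment a) := by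
  refine intervalIntegral.continuous_primitive (fun A B => ?_) 0
  exact (intervalIntegral.intervalIntegrable_rpow' (by linarith)).mul_continuousOn (by fun_prop)

lemma exists_cosMoment_bound {a : ℝ} (ha0 : 0 < a) (ha1 : a < 1) :
    ∃ M : ℝ, ∀ T, 0 ≤ T → |cosMoment a T| ≤ M := by
  set L := Real.Gamma a * Real.cos (a * π / 2)
  have h1 : ∀ᶠ T in atTop, |cosMoment a T| ≤ |L| + 1 :=
    (tendsto_cosMoment ha0 ha1).abs.eventually_le_const (by linarith)
  obtain ⟨T₀, hT₀⟩ := eventually_atTop.1 h1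
  obtain ⟨C, hC⟩ := isCompact_Icc.exists_bound_of_continuousOn (s := Icc 0 T₀)
    (continuous_cosMoment ha0).continuousOn
  refine ⟨max (|L| + 1) C, fun T hT => ?_⟩
  rcases le_total T₀ T with h | h
  · exact (hT₀ T h).trans (le_max_left _ _)
  · exact (hC T ⟨hT, h⟩).trans (le_max_right _ _)

/-- Scaling `r ↦ c r` in the truncated cosine moment. -/
lemma integral_rpow_mul_cos_scaled {a c R : ℝ} (hc : 0 < c) (hR : 0 ≤ R) :
    ∫ r in (0 : ℝ)..R, r ^ (a - 1) * Real.cos (c * r) = c ^ (-a) * cosMoment a (c * R) := by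
  have h := intervalIntegral.integral_comp_mul_left (a := 0) (b := R)
    (fun u : ℝ => u ^ (a - 1) * Real.cos u) hc.ne'
  rw [mul_zero, smul_eq_mul] at h
  have h2 : ∫ r in (0 : ℝ)..R, (c * r) ^ (a - 1) * Real.cos (c * r)
      = c ^ (a - 1) * ∫ r in (0 : ℝ)..R, r ^ (a - 1) * Real.cos (c * r) := by
    rw [← intervalIntegral.integral_const_mul]
    refine intervalIntegral.integral_congr fun r hr => ?_
    rw [uIcc_of_le hR] at hr
    simp only [Real.mul_rpow hc.le hr.1]
    ring
  rw [h2] at h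
  have h3 : c ^ (-a) = (c ^ (a - 1))⁻¹ * c⁻¹ := by
    rw [← Real.rpow_neg hc.le, ← Real.rpow_neg_one c, ← Real.rpow_add hc]; ring_nf
  have h4 : c ^ (a - 1) ≠ 0 := (Real.rpow_pos_of_pos hc _).ne'
  rw [h3, cosMoment, mul_assoc, ← h, inv_mul_cancel_left₀ h4]

/-! ### The modulus and the angle -/

lemma nrm_eq_norm (x : ℝ × ℝ) : nrm x = ‖(⟨x.1, x.2⟩ : ℂ)‖ := by
  rw [Complex.norm_eq_sqrt_sq_add_sq, nrm]

lemma nrm_mul_cos_ang (x : ℝ × ℝ) : nrm x * Real.cos (ang x) = x.1 := by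
  have h : Real.cos (ang x) = Real.cos (Complex.arg ⟨x.1, x.2⟩) := by
    unfold ang
    split_ifs with h
    · rw [h, Real.cos_neg]
    · rfl
  rw [h, nrm_eq_norm, Complex.norm_mul_cos_arg]

lemma nrm_mul_sin_ang (x : ℝ × ℝ) : nrm x * Real.sin (ang x) = x.2 := by
  have h : Real.sin (ang x) = Real.sin (Complex.arg ⟨x.1, x.2⟩) := by
    unfold ang
    split_ifs with h
    · rw [h, Real.sin_neg, Real.sin_pi, neg_zero]
    · rfl
  rw [h, nrm_eq_norm, Complex.norm_mul_sin_arg]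

lemma nrm_pos {x : ℝ × ℝ} (hx : x ≠ 0) : 0 < nrm x := by
  rw [nrm_eq_norm, norm_pos_iff]
  intro h
  apply hx
  rw [Complex.ext_iff] at h
  exact Prod.ext h.1 h.2

lemma nrm_polar {r : ℝ} (hr : 0 < r) (θ : ℝ) : nrm (r * Real.cos θ, r * Real.sin θ) = r := by
  rw [nrm, show (r * Real.cos θ) ^ 2 + (r * Real.sin θ) ^ 2 = r ^ 2 by
    linear_combination r ^ 2 * Real.sin_sq_add_cos_sq θ, Real.sqrt_sq hr.le]

lemma ang_polar {r : ℝ} (hr : 0 < r) {θ : ℝ} (hθ : θ ∈ Ioo (-π) π) :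
    ang (r * Real.cos θ, r * Real.sin θ) = θ := by
  have h : Complex.arg ⟨r * Real.cos θ, r * Real.sin θ⟩ = θ := by
    have he : (⟨r * Real.cos θ, r * Real.sin θ⟩ : ℂ)
        = r * (Complex.cos θ + Complex.sin θ * Complex.I) := by
      apply Complex.ext <;> simp [← Complex.ofReal_cos, ← Complex.ofReal_sin]
    rw [he, Complex.arg_mul_cos_add_sin_mul_I hr ⟨hθ.1, hθ.2.le⟩]
  unfold ang
  simp only [h, if_neg hθ.2.ne]

lemma measurable_nrm : Measurable nrm := by
  unfold nrm
  fun_prop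

/-! ### Reduction to polar coordinates -/

/-- The integrand of the truncated Fourier integral in polar coordinates `(r, θ)`, Jacobian
included; here `a = 2 - s`, and `N`, `φ` are the modulus and the angle of the frequency. -/
def polarIntegrand (a N φ : ℝ) (Ω : ℝ → ℝ) (p : ℝ × ℝ) : ℂ :=
  ((p.1 ^ (a - 1) * Ω p.2 : ℝ) : ℂ) *
    Complex.exp (-((2 * π * N * Real.cos (φ - p.2) * p.1 : ℝ) : ℂ) * Complex.I)

lemma norm_polarIntegrand (a N φ : ℝ) (Ω : ℝ → ℝ) (p : ℝ × ℝ) :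
    ‖polarIntegrand a N φ Ω p‖ = |p.1 ^ (a - 1) * Ω p.2| := by
  rw [polarIntegrand, norm_mul, ← Complex.ofReal_neg, Complex.norm_exp_ofReal_mul_I, mul_one,
    Complex.norm_real, Real.norm_eq_abs]

lemma integrable_polarIntegrand {a : ℝ} (ha0 : 0 < a) (N φ : ℝ) {Ω : ℝ → ℝ}
    (hΩ : Continuous Ω) {R : ℝ} (hR : 0 ≤ R) :
    Integrable (polarIntegrand a N φ Ω)
      ((volume.restrict (Ioc 0 R)).prod (volume.restrict (Ioo (-π) π))) := by
  have h1 : Integrable (fun r : ℝ => r ^ (a - 1)) (volume.restrict (Ioc 0 R)) := by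
    have := intervalIntegral.intervalIntegrable_rpow' (a := 0) (b := R) (r := a - 1)
      (by linarith)
    rwa [intervalIntegrable_iff_integrableOn_Ioc_of_le hR] at this
  have h2 : Integrable Ω (volume.restrict (Ioo (-π) π)) :=
    (hΩ.integrableOn_Icc (a := -π) (b := π)).mono_set Ioo_subset_Icc_self
  have hm : Measurable Ω := hΩ.measurable
  refine (h1.mul_prod h2).mono (Measurable.aestronglyMeasurable ?_) ?_
  · unfold polarIntegrand
    fun_prop
  · exact Eventually.of_forall fun p => by rw [norm_polarIntegrand, Real.norm_eq_abs]

lemma fourierIntegral_polar {s : ℝ} (hs2 : s < 2) {Ω : ℝ → ℝ}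
    (hΩ : Continuous Ω) (ξ : ℝ × ℝ) {R : ℝ} (hR : 0 ≤ R) :
    ∫ x in {x : ℝ × ℝ | nrm x ≤ R}, ((nrm x ^ (-s) * Ω (ang x) : ℝ) : ℂ) *
        Complex.exp (-((2 * π * (x.1 * ξ.1 + x.2 * ξ.2) : ℝ) : ℂ) * Complex.I)
      = ∫ θ in (-π)..π, ∫ r in (0 : ℝ)..R,
          polarIntegrand (2 - s) (nrm ξ) (ang ξ) Ω (r, θ) := by
  have hS : MeasurableSet {x : ℝ × ℝ | nrm x ≤ R} := measurableSet_le measurable_nrm (by fun_prop)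
  have hS' : MeasurableSet {p : ℝ × ℝ | p.1 ≤ R} := measurableSet_le (by fun_prop) (by fun_prop)
  have hT : MeasurableSet (Ioi (0 : ℝ) ×ˢ Ioo (-π) π) := measurableSet_Ioi.prod measurableSet_Ioo
  rw [← integral_indicator hS, ← integral_comp_polarCoord_symm, polarCoord_target]
  have hcongr : ∀ p ∈ Ioi (0 : ℝ) ×ˢ Ioo (-π) π,
      p.1 • ({x : ℝ × ℝ | nrm x ≤ R}.indicator (fun x =>
        ((nrm x ^ (-s) * Ω (ang x) : ℝ) : ℂ) *
        Complex.exp (-((2 * π * (x.1 * ξ.1 + x.2 * ξ.2) : ℝ) : ℂ) * Complex.I))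
          (polarCoord.symm p))
      = {p : ℝ × ℝ | p.1 ≤ R}.indicator
          (polarIntegrand (2 - s) (nrm ξ) (ang ξ) Ω) p := by
    rintro ⟨r, θ⟩ ⟨hr, hθ⟩
    have hr : 0 < r := hr
    have hθ : θ ∈ Ioo (-π) π := hθ
    simp only [polarCoord_symm_apply, indicator_apply, mem_ofPred_eq, nrm_polar hr, ang_polar hr hθ]
    split_ifs with h
    · have hp : r ^ (2 - s - 1) = r * r ^ (-s) := by
        rw [mul_comm, ← Real.rpow_add_one hr.ne']; ring_nf
      have hx : 2 * π * (r * Real.cos θ * ξ.1 + r * Real.sin θ * ξ.2)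
          = 2 * π * nrm ξ * Real.cos (ang ξ - θ) * r := by
        rw [Real.cos_sub]
        linear_combination -2 * π * r * (Real.cos θ * nrm_mul_cos_ang ξ +
          Real.sin θ * nrm_mul_sin_ang ξ)
      rw [polarIntegrand, hx, hp, Complex.real_smul, ← mul_assoc]
      push_cast
      ring
    · simp
  rw [setIntegral_congr_fun hT hcongr, setIntegral_indicator hS']
  have hset : Ioi (0 : ℝ) ×ˢ Ioo (-π) π ∩ {p : ℝ × ℝ | p.1 ≤ R} = Ioc 0 R ×ˢ Ioo (-π) π := by
    ext p
    simp only [mem_inter_iff, mem_prod, mem_Ioi, mem_ofPred_eq, mem_Ioc]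
    tauto
  rw [hset, Measure.volume_eq_prod, ← Measure.prod_restrict,
    integral_prod_symm _ (integrable_polarIntegrand (by linarith) _ _ hΩ hR),
    intervalIntegral.integral_of_le (by linarith [Real.pi_pos]), integral_Ioc_eq_integral_Ioo]
  simp only [intervalIntegral.integral_of_le hR]

/-- Replacing `θ` by `θ + π` conjugates the radial integral, so only its real part survives. -/
lemma integral_polarIntegrand_eq_ofReal {a : ℝ} (ha0 : 0 < a) (N φ : ℝ) {Ω : ℝ → ℝ}
    (hΩ : Continuous Ω) (hπ : ∀ θ, Ω (θ + π) = Ω θ) {R : ℝ} (hR : 0 ≤ R) :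
    ∫ θ in (-π)..π, ∫ r in (0 : ℝ)..R, polarIntegrand a N φ Ω (r, θ)
      = ((∫ θ in (-π)..π, Ω θ * ∫ r in (0 : ℝ)..R,
          r ^ (a - 1) * Real.cos (2 * π * N * |Real.cos (φ - θ)| * r) : ℝ) : ℂ) := by
  have hpi : -π ≤ π := by linarith [Real.pi_pos]
  set h : ℝ → ℂ := fun θ => ∫ r in (0 : ℝ)..R, polarIntegrand a N φ Ω (r, θ) with hh
  have hconj : ∀ θ, h (θ + π) = (starRingEnd ℂ) (h θ) := by
    intro θ
    simp only [hh, intervalIntegral.integral_of_le hR]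
    rw [← integral_conj]
    refine integral_congr_ae (Eventually.of_forall fun r => ?_)
    simp only [polarIntegrand, hπ, map_mul, Complex.conj_ofReal, ← Complex.exp_conj, map_neg,
      Complex.conj_I]
    rw [show φ - (θ + π) = φ - θ - π by ring, Real.cos_sub_pi]
    push_cast
    ring_nf
  have hper : Function.Periodic h (2 * π) := by
    intro θ
    rw [two_mul, ← add_assoc, hconj, hconj, Complex.conj_conj]
  have hreal : (starRingEnd ℂ) (∫ θ in (-π)..π, h θ) = ∫ θ in (-π)..π, h θ := by
    calc (starRingEnd ℂ) (∫ θ in (-π)..π, h θ)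
        = ∫ θ in (-π)..π, (starRingEnd ℂ) (h θ) := by
          simp only [intervalIntegral.integral_of_le hpi]
          rw [integral_conj]
      _ = ∫ θ in (-π)..π, h (θ + π) := by simp only [hconj]
      _ = ∫ θ in (0 : ℝ)..(0 + 2 * π), h θ := by
          rw [intervalIntegral.integral_comp_add_right]; congr 1 <;> ring
      _ = ∫ θ in (-π)..(-π + 2 * π), h θ := hper.intervalIntegral_add_eq _ _
      _ = ∫ θ in (-π)..π, h θ := by congr 1; ring
  have hint : IntervalIntegrable h volume (-π) π := by
    rw [intervalIntegrable_iff_integrableOn_Ioo_of_le hpi]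
    have := (integrable_polarIntegrand ha0 N φ hΩ hR).integral_prod_right
    simpa only [hh, intervalIntegral.integral_of_le hR] using! this
  rw [← Complex.conj_eq_iff_re.1 hreal]
  congr 1
  have hre := Complex.reCLM.intervalIntegral_comp_comm hint
  simp only [Complex.reCLM_apply] at hre
  rw [← hre]
  refine intervalIntegral.integral_congr fun θ _ => ?_
  have hint2 : IntervalIntegrable (fun r => polarIntegrand a N φ Ω (r, θ)) volume 0 R := by
    have h0 := intervalIntegral.intervalIntegrable_rpow' (a := 0) (b := R) (r := a - 1)
      (by linarith)
    have h1 : IntervalIntegrable (fun r : ℝ => ((r ^ (a - 1) * Ω θ : ℝ) : ℂ)) volume 0 R :=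
      ⟨(h0.mul_const (Ω θ)).1.ofReal, (h0.mul_const (Ω θ)).2.ofReal⟩
    exact h1.mul_continuousOn (by fun_prop)
  have hre2 := Complex.reCLM.intervalIntegral_comp_comm hint2
  simp only [Complex.reCLM_apply] at hre2
  simp only [hh]
  rw [← hre2, ← intervalIntegral.integral_const_mul]
  refine intervalIntegral.integral_congr fun r hr => ?_
  rw [uIcc_of_le hR] at hr
  simp only [polarIntegrand, Complex.re_ofReal_mul]
  rw [← Complex.ofReal_neg, Complex.exp_ofReal_mul_I_re, Real.cos_neg]
  have : Real.cos (2 * π * N * Real.cos (φ - θ) * r)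
      = Real.cos (2 * π * N * |Real.cos (φ - θ)| * r) := by
    rcases abs_choice (Real.cos (φ - θ)) with h | h <;> rw [h]
    rw [← Real.cos_neg]; ring_nf
  rw [this]
  ring

/-! ### Passing to the limit in the angular integral -/

lemma intervalIntegrable_abs_cos_rpow {a : ℝ} (ha0 : 0 < a) (ha1 : a < 1) (φ : ℝ) :
    IntervalIntegrable (fun θ => |Real.cos (φ - θ)| ^ (-a)) volume (-π) π := by
  have hpi := Real.pi_pos
  have h1 : IntervalIntegrable (fun θ => |Real.sin θ| ^ (-a)) volume 0 (π / 2) := by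
    have hb := ((intervalIntegral.intervalIntegrable_rpow' (a := 0) (b := π / 2) (r := -a)
      (by linarith)).const_mul ((2 / π) ^ (-a)))
    refine hb.mono_fun (Measurable.aestronglyMeasurable (by fun_prop)) ?_
    rw [uIoc_of_le (by positivity)]
    filter_upwards [ae_restrict_mem measurableSet_Ioc] with θ hθ
    have hθ0 : 0 < θ := hθ.1
    rw [Real.norm_of_nonneg (by positivity), Real.norm_of_nonneg (by positivity),
      ← Real.mul_rpow (by positivity) hθ0.le]
    exact Real.rpow_le_rpow_of_nonpos (by positivity)
      ((Real.mul_le_sin hθ0.le hθ.2).trans (le_abs_self _)) (by linarith)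
  have h2 : IntervalIntegrable (fun θ => |Real.sin θ| ^ (-a)) volume (-(π / 2)) (π / 2) := by
    refine IntervalIntegrable.trans (b := 0) ?_ h1
    have := (IntervalIntegrable.iff_comp_neg (by finiteness)).1 h1
    simpa using this.symm
  have hper : Function.Periodic (fun θ => |Real.sin θ| ^ (-a)) π := fun θ => by
    simp [Real.sin_add_pi]
  have h3 : ∀ A B, IntervalIntegrable (fun θ => |Real.sin θ| ^ (-a)) volume A B :=
    hper.intervalIntegrable hpi.ne' (t := -(π / 2))
      (by rwa [show -(π / 2) + π = π / 2 by ring])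
  have h4 := (h3 (-π + (π / 2 - φ)) (π + (π / 2 - φ))).comp_add_right (π / 2 - φ)
  simp only [add_sub_cancel_right] at h4
  refine h4.congr fun θ _ => ?_
  rw [show θ + (π / 2 - φ) = π / 2 - (φ - θ) by ring, Real.sin_pi_div_two_sub]

lemma ae_cos_ne_zero (φ : ℝ) : ∀ᵐ θ : ℝ, Real.cos (φ - θ) ≠ 0 := by
  have h : {θ : ℝ | ¬ Real.cos (φ - θ) ≠ 0} ⊆ range fun k : ℤ => φ - (2 * k + 1) * π / 2 := by
    intro θ hθ
    obtain ⟨k, hk⟩ := Real.cos_eq_zero_iff.1 (not_not.1 hθ)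
    exact ⟨k, by simp only; linarith⟩
  exact ((countable_range _).mono h).measure_zero volume

/-- Dominated convergence in the angular variable. -/
lemma tendsto_angular {a : ℝ} (ha0 : 0 < a) (ha1 : a < 1) {N : ℝ} (hN : 0 < N) (φ : ℝ)
    {Ω : ℝ → ℝ} (hΩ : Continuous Ω) :
    Tendsto (fun R : ℝ => ∫ θ in (-π)..π, Ω θ * ∫ r in (0 : ℝ)..R,
        r ^ (a - 1) * Real.cos (2 * π * N * |Real.cos (φ - θ)| * r)) atTop
      (𝓝 (N ^ (-a) * tauC a * ∫ θ in (-π)..π, |Real.cos (φ - θ)| ^ (-a) * Ω θ)) := by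
  have hpi := Real.pi_pos
  obtain ⟨M, hM⟩ := exists_cosMoment_bound ha0 ha1
  obtain ⟨C, hC⟩ := isCompact_Icc.exists_bound_of_continuousOn (s := Icc (-π) π) hΩ.continuousOn
  let k : ℝ → ℝ := fun θ => 2 * π * N * |Real.cos (φ - θ)|
  have hk0 : ∀ θ, 0 ≤ k θ := fun θ => by positivity
  have hkpos : ∀ θ, Real.cos (φ - θ) ≠ 0 → 0 < k θ := fun θ h => by positivity
  have hkpow : ∀ θ, k θ ^ (-a) = (2 * π) ^ (-a) * N ^ (-a) * |Real.cos (φ - θ)| ^ (-a) :=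
    fun θ => by
      rw [Real.mul_rpow (by positivity) (abs_nonneg _), Real.mul_rpow (by positivity) hN.le]
  have hkint : IntervalIntegrable (fun θ => k θ ^ (-a)) volume (-π) π := by
    simp only [hkpow]
    exact (intervalIntegrable_abs_cos_rpow ha0 ha1 φ).const_mul _
  have hscaled : ∀ R : ℝ, 0 ≤ R → ∫ θ in (-π)..π, Ω θ * ∫ r in (0 : ℝ)..R,
      r ^ (a - 1) * Real.cos (2 * π * N * |Real.cos (φ - θ)| * r)
      = ∫ θ in (-π)..π, Ω θ * (k θ ^ (-a) * cosMoment a (k θ * R)) := by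
    intro R hR
    refine intervalIntegral.integral_congr_ae ?_
    filter_upwards [ae_cos_ne_zero φ] with θ hθ _
    rw [← integral_rpow_mul_cos_scaled (hkpos θ hθ) hR]
  have hlim : Tendsto (fun R : ℝ => ∫ θ in (-π)..π, Ω θ * (k θ ^ (-a) * cosMoment a (k θ * R)))
      atTop (𝓝 (∫ θ in (-π)..π,
        Ω θ * (k θ ^ (-a) * (Real.Gamma a * Real.cos (a * π / 2))))) := by
    refine intervalIntegral.tendsto_integral_filter_of_dominated_convergence
      (fun θ => C * (k θ ^ (-a) * M)) ?_ ?_ ((hkint.mul_const M).const_mul C) ?_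
    · refine Eventually.of_forall fun R => Measurable.aestronglyMeasurable ?_
      have hm : Measurable Ω := hΩ.measurable
      have hm2 : Measurable (cosMoment a) := (continuous_cosMoment ha0).measurable
      have hmk : Measurable k := by fun_prop
      exact hm.mul ((hmk.pow_const _).mul (hm2.comp (hmk.mul_const R)))
    · filter_upwards [eventually_ge_atTop 0] with R hR
      refine Eventually.of_forall fun θ hθ => ?_
      rw [uIoc_of_le (by linarith)] at hθ
      have h1 := hC θ ⟨hθ.1.le, hθ.2⟩
      have h2 := hM (k θ * R) (mul_nonneg (hk0 θ) hR)
      have h3 : 0 ≤ k θ ^ (-a) := Real.rpow_nonneg (hk0 θ) _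
      rw [norm_mul, norm_mul, Real.norm_of_nonneg h3]
      have h4 : 0 ≤ C := (norm_nonneg _).trans h1
      gcongr
      exact h2
    · filter_upwards [ae_cos_ne_zero φ] with θ hθ _
      exact (((tendsto_cosMoment ha0 ha1).comp
        (tendsto_id.const_mul_atTop (hkpos θ hθ))).const_mul _).const_mul _
  have hval : ∫ θ in (-π)..π, Ω θ * (k θ ^ (-a) * (Real.Gamma a * Real.cos (a * π / 2)))
      = N ^ (-a) * tauC a * ∫ θ in (-π)..π, |Real.cos (φ - θ)| ^ (-a) * Ω θ := by
    rw [← intervalIntegral.integral_const_mul]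
    refine intervalIntegral.integral_congr fun θ _ => ?_
    simp only [hkpow, tauC]
    ring
  rw [← hval]
  refine hlim.congr' ?_
  filter_upwards [eventually_ge_atTop 0] with R hR
  exact (hscaled R hR).symm

/-- For `1 < s < 2` and a smooth π-periodic angle function `Ω`, the truncated
Fourier integral of `|x|^{-s} Ω(θ(x))` over balls of radius `R` converges, as `R → ∞`, to
`|ξ|^{-2+s} τ_{2-s} ∫_{-π}^{π} |cos(φ-θ)|^{-2+s} Ω(θ) dθ`, where `ξ = |ξ| e_φ`. -/
theorem statement0 (s : ℝ) (hs1 : 1 < s) (hs2 : s < 2) (Ω : ℝ → ℝ)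
    (hsmooth : ContDiff ℝ (⊤ : ℕ∞) Ω) (hper : ∀ θ, Ω (θ + 2 * π) = Ω θ)
    (hπper : ∀ θ, Ω (θ + π) = Ω θ) (ξ : ℝ × ℝ) (hξ : ξ ≠ 0) :
    Tendsto
      (fun R : ℝ => ∫ x in {x : ℝ × ℝ | nrm x ≤ R},
        ((nrm x ^ (-s) * Ω (ang x) : ℝ) : ℂ) *
          Complex.exp (-((2 * π * (x.1 * ξ.1 + x.2 * ξ.2) : ℝ) : ℂ) * Complex.I))
      atTop
      (𝓝 ((nrm ξ ^ (-2 + s) * tauC (2 - s) *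
        ∫ θ in (-π)..π, |Real.cos (ang ξ - θ)| ^ (-2 + s) * Ω θ : ℝ))) := by
  have ha0 : 0 < 2 - s := by linarith
  have hΩ : Continuous Ω := hsmooth.continuous
  have h := tendsto_angular ha0 (by linarith) (nrm_pos hξ) (ang ξ) hΩ
  rw [show -(2 - s) = -2 + s by ring] at h
  refine ((Complex.continuous_ofReal.tendsto _).comp h).congr' ?_
  filter_upwards [eventually_ge_atTop 0] with R hR
  rw [fourierIntegral_polar hs2 hΩ ξ hR,
    integral_polarIntegrand_eq_ofReal ha0 _ _ hΩ hπper hR, Function.comp_apply]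

end Aniso
end
end

section
/- Let 0<s<1 and let Ω satisfy (H). Then for every x∈ℝ²∖{0}, |x|^{−s}·Ω(θ(x)) = τ_s · ∫_{−π}^{π} |x·e_φ|^{−s} · Ω̃(φ) dφ. -/
/-!
Both sides are linear in `Ω`, and `Ω` is `π`-periodic, so the identity can be tested on the
characters `e_k(u) = e^{2iku}`. Convolution with `|cos|^{-s}` multiplies `e_k` by a number
`lam (-s) k`, and `Ω ↦ Ω̃` multiplies it by a number `mu s k`, built from the regularised integral
`mm (-2 + s) k` of `|cos|^{-2+s}` against `e_k`. The theorem says that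
`τ_s · lam (-s) k · mu s k = 1` for all `k` (`tau_lam_mu`).

Integrating by parts (`cos_parts`) gives first-order recurrences in `k` for both multipliers
(`lam_rec`, `mm_rec`, `mu_rec`). They are inverse to each other, so `lam (-s) k * mu s k` does not
depend on `k` (`lam_mul_mu`). The inhomogeneous term in the recurrence for `mm` is cancelled by the
`c_s`-term of `Ω̃`, and this, as well as the case `k = 0`, comes down to the value of
`∫ |cos u|^a du` (`cos_rpow_integral`, a Beta integral) together with the duplication and
reflection formulas for `Γ` (`tau_two_sub`, `tau_lam_zero`).

For general `Ω`, the Fourier coefficients decay fast enough (`cf_summable`) to exchange sum and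
integral twice: once for `Ω̃` (`Omt_hasSum`), where the bound
`|e_k(u) - e_k(π/2)| ≤ 2|k||cos u|` tames the singularity `|cos u|^{-2+s}`, and once for the outer
integral (`circle_identity`). Homogeneity in `|x|` then yields the statement.
-/

open MeasureTheory Real Filter Set Topology
open scoped ENNReal

noncomputable section

namespace Aniso

/-! ### The integral of `|cos|^a` -/

lemma betaReal_aux {α β : ℝ} (hα : 0 < α) (hβ : 0 < β) :
    IntegrableOn (fun x : ℝ => x ^ (α - 1) * (1 - x) ^ (β - 1)) (Ioo 0 1) ∧
      ∫ x in Ioo (0 : ℝ) 1, x ^ (α - 1) * (1 - x) ^ (β - 1) =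
        Real.Gamma α * Real.Gamma β / Real.Gamma (α + β) := by
  have hE : EqOn (fun x : ℝ => ((x : ℂ) ^ ((α : ℂ) - 1) * (1 - (x : ℂ)) ^ ((β : ℂ) - 1)))
      (fun x : ℝ => ((x ^ (α - 1) * (1 - x) ^ (β - 1) : ℝ) : ℂ)) (Ioo 0 1) := by
    intro x hx
    have h1 : 0 ≤ x := hx.1.le
    have h2 : 0 ≤ 1 - x := by linarith [hx.2]
    simp only [Complex.ofReal_mul, Complex.ofReal_cpow h1, Complex.ofReal_cpow h2]
    push_cast
    rfl
  have hI := Complex.betaIntegral_convergent (u := α) (v := β) (by simpa) (by simpa)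
  rw [intervalIntegrable_iff_integrableOn_Ioo_of_le (by simp)] at hI
  have hI' := hI.congr_fun hE measurableSet_Ioo
  have hB := Complex.Gamma_mul_Gamma_eq_betaIntegral (s := α) (t := β) (by simpa) (by simpa)
  rw [Complex.betaIntegral, intervalIntegral.integral_of_le zero_le_one,
    integral_Ioc_eq_integral_Ioo, setIntegral_congr_fun measurableSet_Ioo hE,
    integral_complex_ofReal, Complex.Gamma_ofReal, Complex.Gamma_ofReal, ← Complex.ofReal_add,
    Complex.Gamma_ofReal] at hB
  refine ⟨by simpa [IntegrableOn] using hI'.re, ?_⟩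
  rw [eq_div_iff (Real.Gamma_pos_of_pos (by positivity)).ne', mul_comm]
  exact_mod_cast hB.symm

/-- Wallis-type integrals; the substitution `x = cos² u` turns the Beta integral into them. -/
lemma cos_rpow_aux {a : ℝ} (ha : -1 < a) :
    IntegrableOn (fun u : ℝ => |Real.cos u| ^ a) (Ioo 0 (π / 2)) ∧
      2 * ∫ u in Ioo 0 (π / 2), |Real.cos u| ^ a =
        Real.Gamma ((a + 1) / 2) * Real.Gamma (1 / 2) / Real.Gamma (a / 2 + 1) := by
  have hcos : ∀ u ∈ Ioo 0 (π / 2), 0 < Real.cos u := fun u hu =>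
    Real.cos_pos_of_mem_Ioo ⟨by linarith [hu.1, Real.pi_pos], hu.2⟩
  have hsin : ∀ u ∈ Ioo 0 (π / 2), 0 < Real.sin u := fun u hu =>
    Real.sin_pos_of_pos_of_lt_pi hu.1 (by linarith [hu.2, Real.pi_pos])
  have hd : ∀ u ∈ Ioo 0 (π / 2), HasDerivWithinAt (fun u => Real.cos u ^ 2)
      (-(2 * Real.cos u * Real.sin u)) (Ioo 0 (π / 2)) u := by
    intro u _
    have := ((Real.hasDerivAt_cos u).fun_pow 2).hasDerivWithinAt (s := Ioo 0 (π / 2))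
    refine this.congr_deriv ?_
    simp
  have hinj : InjOn (fun u => Real.cos u ^ 2) (Ioo 0 (π / 2)) := by
    intro u hu v hv h
    have h' : Real.cos u = Real.cos v :=
      (pow_left_inj₀ (hcos u hu).le (hcos v hv).le two_ne_zero).1 h
    exact Real.injOn_cos ⟨hu.1.le, by linarith [hu.2, Real.pi_pos]⟩
      ⟨hv.1.le, by linarith [hv.2, Real.pi_pos]⟩ h'
  have himg : (fun u => Real.cos u ^ 2) '' Ioo 0 (π / 2) = Ioo 0 1 := by
    ext y
    constructor
    · rintro ⟨u, hu, rfl⟩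
      have := Real.sin_sq_add_cos_sq u
      have h1 := hcos u hu
      have h2 := hsin u hu
      exact ⟨by positivity, by simp only; nlinarith⟩
    · rintro ⟨h0, h1⟩
      have hs0 : 0 < √y := Real.sqrt_pos.2 h0
      have hs1 : √y < 1 := by rw [Real.sqrt_lt' one_pos]; simpa
      refine ⟨Real.arccos (√y), ⟨Real.arccos_pos.2 hs1, Real.arccos_lt_pi_div_two.2 hs0⟩, ?_⟩
      simp only
      rw [Real.cos_arccos (by linarith) hs1.le, Real.sq_sqrt h0.le]
  have hE : EqOn (fun u => |(-(2 * Real.cos u * Real.sin u))| •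
      ((Real.cos u ^ 2) ^ ((a + 1) / 2 - 1) * (1 - Real.cos u ^ 2) ^ ((1 / 2 : ℝ) - 1)))
      (fun u => 2 * |Real.cos u| ^ a) (Ioo 0 (π / 2)) := by
    intro u hu
    have h1 := hcos u hu
    have h2 := hsin u hu
    have e1 : 1 - Real.cos u ^ 2 = Real.sin u ^ 2 := by
      have := Real.sin_sq_add_cos_sq u
      linarith
    simp only [smul_eq_mul]
    rw [e1, abs_neg, abs_of_pos (by positivity), abs_of_pos h1, ← Real.rpow_natCast,
      ← Real.rpow_natCast, ← Real.rpow_mul h1.le, ← Real.rpow_mul h2.le]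
    have e2 : ((2 : ℕ) : ℝ) * ((a + 1) / 2 - 1) = a - 1 := by push_cast; ring
    have e3 : ((2 : ℕ) : ℝ) * ((1 / 2 : ℝ) - 1) = -1 := by push_cast; ring
    rw [e2, e3, Real.rpow_sub_one h1.ne', Real.rpow_neg_one]
    field_simp
  obtain ⟨hb1, hb2⟩ := betaReal_aux (α := (a + 1) / 2) (β := 1 / 2) (by linarith) (by norm_num)
  rw [← himg] at hb1 hb2
  rw [integrableOn_image_iff_integrableOn_abs_deriv_smul measurableSet_Ioo hd hinj] at hb1
  rw [integral_image_eq_integral_abs_deriv_smul measurableSet_Ioo hd hinj,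
    setIntegral_congr_fun measurableSet_Ioo hE, integral_const_mul] at hb2
  have hb3 := hb1.congr_fun hE measurableSet_Ioo
  refine ⟨by simpa [IntegrableOn] using hb3.const_mul (1 / 2), ?_⟩
  rw [hb2]
  congr 2
  ring

lemma cos_rpow_periodic (a : ℝ) : Function.Periodic (fun u : ℝ => |Real.cos u| ^ a) π := by
  intro u
  simp [Real.cos_add_pi]

lemma cos_rpow_int0 {a : ℝ} (ha : -1 < a) :
    IntervalIntegrable (fun u : ℝ => |Real.cos u| ^ a) volume 0 (π / 2) := by
  rw [intervalIntegrable_iff_integrableOn_Ioo_of_le (by positivity)]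
  exact (cos_rpow_aux ha).1

lemma cos_rpow_int1 {a : ℝ} (ha : -1 < a) :
    IntervalIntegrable (fun u : ℝ => |Real.cos u| ^ a) volume (-(π / 2)) 0 := by
  rw [IntervalIntegrable.iff_comp_neg]
  simpa using (cos_rpow_int0 ha).symm

/-- `|cos|^a` is locally integrable for `a > -1`. -/
lemma cos_rpow_intervalIntegrable {a : ℝ} (ha : -1 < a) (p q : ℝ) :
    IntervalIntegrable (fun u : ℝ => |Real.cos u| ^ a) volume p q := by
  refine (cos_rpow_periodic a).intervalIntegrable Real.pi_pos.ne' (t := -(π / 2)) ?_ p q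
  have : -(π / 2) + π = π / 2 := by ring
  rw [this]
  exact (cos_rpow_int1 ha).trans (cos_rpow_int0 ha)

lemma cos_rpow_integral {a : ℝ} (ha : -1 < a) :
    ∫ u in (-π)..π, |Real.cos u| ^ a =
      2 * (Real.Gamma ((a + 1) / 2) * √π / Real.Gamma (a / 2 + 1)) := by
  have hI := cos_rpow_intervalIntegrable ha
  have h0 : ∫ u in (0:ℝ)..(π / 2), |Real.cos u| ^ a = ∫ u in Ioo 0 (π / 2), |Real.cos u| ^ a := by
    rw [intervalIntegral.integral_of_le (by positivity), integral_Ioc_eq_integral_Ioo]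
  have h1 : ∫ u in (-(π / 2))..0, |Real.cos u| ^ a = ∫ u in (0:ℝ)..(π / 2), |Real.cos u| ^ a := by
    have := intervalIntegral.integral_comp_neg (a := 0) (b := π / 2) (fun u : ℝ => |Real.cos u| ^ a)
    simpa using this.symm
  have hP := (cos_rpow_periodic a).intervalIntegral_add_eq
  have h2 : ∫ u in (-π)..0, |Real.cos u| ^ a = ∫ u in (-(π / 2))..(π / 2), |Real.cos u| ^ a := by
    have := hP (-π) (-(π / 2))
    rwa [neg_add_cancel, show -(π / 2) + π = π / 2 by ring] at this
  have h3 : ∫ u in (0:ℝ)..π, |Real.cos u| ^ a = ∫ u in (-(π / 2))..(π / 2), |Real.cos u| ^ a := by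
    have := hP 0 (-(π / 2))
    rwa [zero_add, show -(π / 2) + π = π / 2 by ring] at this
  rw [← intervalIntegral.integral_add_adjacent_intervals (hI (-π) 0) (hI 0 π), h2, h3,
    ← intervalIntegral.integral_add_adjacent_intervals (hI (-(π / 2)) 0) (hI 0 (π / 2)), h1, h0,
    ← Real.Gamma_one_half_eq, ← (cos_rpow_aux ha).2]
  ring

/-! ### The characters `e^{2iku}` and integration by parts -/

/-- The character `u ↦ e^{2iku}` of `ℝ / πℤ`. -/
def ek (k : ℤ) (u : ℝ) : ℂ := Complex.exp (2 * k * u * Complex.I)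

lemma ek_add (k : ℤ) (u v : ℝ) : ek k (u + v) = ek k u * ek k v := by
  rw [ek, ek, ek, ← Complex.exp_add]
  congr 1
  push_cast
  ring

lemma ek_norm (k : ℤ) (u : ℝ) : ‖ek k u‖ = 1 := by
  rw [ek, show (2 * k * u * Complex.I : ℂ) = ((2 * k * u : ℝ) : ℂ) * Complex.I by push_cast; ring]
  exact Complex.norm_exp_ofReal_mul_I _

lemma ek_continuous (k : ℤ) : Continuous (ek k) := by
  unfold ek
  fun_prop

lemma ek_zpow (k : ℤ) (u : ℝ) : ek k u = ek 1 u ^ k := by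
  rw [ek, ek, ← Complex.exp_int_mul]
  congr 1
  push_cast
  ring

lemma ek_one_pi_div_two : ek 1 (π / 2) = -1 := by
  rw [ek, ← Complex.exp_pi_mul_I]
  congr 1
  push_cast
  ring

lemma ek_pi_div_two (k : ℤ) : ek k (π / 2) = (-1) ^ k := by
  rw [ek_zpow, ek_one_pi_div_two]

lemma ek_pi (k : ℤ) : ek k π = 1 := by
  rw [ek, ← Complex.exp_int_mul_two_pi_mul_I k]
  congr 1
  ring

lemma norm_pow_sub_pow_aux {z w : ℂ} (hz : ‖z‖ = 1) (hw : ‖w‖ = 1) (n : ℕ) :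
    ‖z ^ n - w ^ n‖ ≤ n * ‖z - w‖ := by
  induction n with
  | zero => simp
  | succ n ih =>
    have e : z ^ (n + 1) - w ^ (n + 1) = z ^ n * (z - w) + (z ^ n - w ^ n) * w := by ring
    rw [e]
    refine (norm_add_le _ _).trans ?_
    rw [norm_mul, norm_mul, norm_pow, hz, hw]
    rw [one_pow]
    push_cast
    linarith

lemma neg_one_zpow_norm (k : ℤ) : ‖((-1 : ℂ) ^ k)‖ = 1 := by simp

/-- The characters approach their value at the zeros of `cos` linearly in `|cos|`, because
`|e^{2iu} + 1| = 2 |cos u|`. -/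
lemma ek_sub_bound (k : ℤ) (u : ℝ) : ‖ek k u - (-1) ^ k‖ ≤ 2 * |(k : ℝ)| * |Real.cos u| := by
  have h1 : ‖ek 1 u - (-1)‖ = 2 * |Real.cos u| := by
    have : ek 1 u - (-1) = Complex.exp (u * Complex.I) * ((2 * Real.cos u : ℝ) : ℂ) := by
      have e1 : ek 1 u = Complex.exp (u * Complex.I) * Complex.exp (u * Complex.I) := by
        rw [ek, ← Complex.exp_add]
        congr 1
        push_cast
        ring
      have e2 : Complex.exp (u * Complex.I) * Complex.exp (-u * Complex.I) = 1 := by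
        rw [← Complex.exp_add]
        simp
      push_cast
      rw [e1, Complex.cos]
      linear_combination -e2
    rw [this, norm_mul, Complex.norm_exp_ofReal_mul_I, one_mul, Complex.norm_real, Real.norm_eq_abs,
      abs_mul, abs_two]
  have hn : ∀ n : ℕ, ‖ek 1 u ^ n - (-1) ^ n‖ ≤ 2 * (n : ℝ) * |Real.cos u| := by
    intro n
    have := norm_pow_sub_pow_aux (ek_norm 1 u) (w := -1) (by simp) n
    rw [h1] at this
    linarith
  rw [ek_zpow]
  obtain ⟨n, rfl | rfl⟩ := k.eq_nat_or_neg
  · simpa using hn n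
  · have e3 : ek 1 u ^ (-(n : ℤ)) - (-1) ^ (-(n : ℤ)) =
        (starRingEnd ℂ) (ek 1 u ^ n - (-1) ^ n) := by
      have e4 : (ek 1 u)⁻¹ = (starRingEnd ℂ) (ek 1 u) := Complex.inv_eq_conj (ek_norm 1 u)
      rw [zpow_neg, zpow_neg, zpow_natCast, zpow_natCast, ← inv_pow, ← inv_pow, e4]
      simp
    rw [e3, Complex.norm_conj]
    simpa using hn n

/-- The odd power `y |y|^a`, with derivative `(a+1) |y|^a` away from `0`. -/
lemma hasDerivAt_oddpow (a : ℝ) {y : ℝ} (hy : y ≠ 0) :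
    HasDerivAt (fun y : ℝ => y * |y| ^ a) ((a + 1) * |y| ^ a) y := by
  have h := (hasDerivAt_id y).mul ((hasDerivAt_abs hy).rpow_const (p := a) (Or.inl (abs_ne_zero.2 hy)))
  refine h.congr_deriv ?_
  have h2 : |y| ^ a = |y| * |y| ^ (a - 1) := by
    rw [Real.rpow_sub_one (abs_ne_zero.2 hy)]
    field_simp
  have h3 : y * (SignType.sign y : ℝ) = |y| := by
    rcases lt_or_gt_of_ne hy with h | h
    · simp [sign_neg h, abs_of_neg h]
    · simp [sign_pos h, abs_of_pos h]
  simp only [id, one_mul]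
  rw [h2]
  linear_combination (a * |y| ^ (a - 1)) * h3

/-- Integration by parts against `cos |cos|^a`: the integral over a period of its derivative
vanishes. The factor `B` is required to vanish at the zeros of `cos` fast enough for the product
to be continuous there. -/
lemma cos_parts {a d C : ℝ} (hd : 0 < a + 1 + d) {B B' : ℝ → ℂ}
    (hB : ∀ u, HasDerivAt B (B' u) u) (hC : ∀ u, ‖B u‖ ≤ C * |Real.cos u| ^ d)
    (hper : B π = B (-π))
    (hint : IntervalIntegrable (fun u => ((|Real.cos u| ^ a : ℝ) : ℂ) *
      (-(a + 1) * (Real.sin u : ℝ) * B u + (Real.cos u : ℝ) * B' u)) volume (-π) π) :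
    ∫ u in (-π)..π, ((|Real.cos u| ^ a : ℝ) : ℂ) *
      (-(a + 1) * (Real.sin u : ℝ) * B u + (Real.cos u : ℝ) * B' u) = 0 := by
  set G : ℝ → ℂ := fun u => ((Real.cos u * |Real.cos u| ^ a : ℝ) : ℂ) * B u with hG
  have hder : ∀ u, Real.cos u ≠ 0 → HasDerivAt G (((|Real.cos u| ^ a : ℝ) : ℂ) *
      (-(a + 1) * (Real.sin u : ℝ) * B u + (Real.cos u : ℝ) * B' u)) u := by
    intro u hu
    have h1 := ((hasDerivAt_oddpow a hu).comp u (Real.hasDerivAt_cos u)).ofReal_comp.mul (hB u)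
    refine h1.congr_deriv ?_
    simp only [Function.comp]
    push_cast
    ring
  have hcount : {u : ℝ | Real.cos u = 0}.Countable := by
    refine (Set.countable_range (fun k : ℤ => (2 * k + 1) * π / 2)).mono ?_
    intro u hu
    obtain ⟨k, hk⟩ := Real.cos_eq_zero_iff.1 hu
    exact ⟨k, hk.symm⟩
  have hcont : Continuous G := by
    rw [continuous_iff_continuousAt]
    intro u
    by_cases hu : Real.cos u = 0
    · have hbound : ∀ v, ‖G v‖ ≤ C * |Real.cos v| ^ (a + 1 + d) := by
        intro v
        by_cases hv : Real.cos v = 0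
        · simp only [hG, hv]
          simp [Real.zero_rpow hd.ne']
        · have hv' : 0 < |Real.cos v| := abs_pos.2 hv
          simp only [hG]
          rw [norm_mul, Complex.norm_real, Real.norm_eq_abs, abs_mul,
            abs_of_nonneg (Real.rpow_nonneg hv'.le a), Real.rpow_add hv', Real.rpow_add hv',
            Real.rpow_one]
          have := mul_le_mul_of_nonneg_left (hC v)
            (mul_nonneg hv'.le (Real.rpow_nonneg hv'.le a))
          linarith
      have hG0 : G u = 0 := by
        simp only [hG, hu]
        simp
      rw [ContinuousAt, hG0]
      refine squeeze_zero_norm hbound ?_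
      have hc : Continuous fun v => C * |Real.cos v| ^ (a + 1 + d) :=
        continuous_const.mul (Real.continuous_cos.abs.rpow_const fun _ => Or.inr hd.le)
      have := hc.tendsto u
      simpa [hu, Real.zero_rpow hd.ne'] using this
    · exact (hder u hu).continuousAt
  rw [integral_eq_of_hasDerivAt_off_countable G _ hcount hcont.continuousOn
    (fun x hx => hder x hx.2) hint]
  simp [hG, hper]

/-! ### The multipliers of powers of `|cos|` and their recurrences -/

/-- The multiplier of convolution with `|cos|^a` on `e^{2iku}`. -/
def lam (a : ℝ) (k : ℤ) : ℂ := ∫ u in (-π)..π, ((|Real.cos u| ^ a : ℝ) : ℂ) * ek k u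

/-- The regularised multiplier of `|cos|^a` on `e^{2iku}`: the value of the character at the
singularity `π/2` is subtracted, which makes the integral converge for `a > -2`. -/
def mm (a : ℝ) (k : ℤ) : ℂ :=
  ∫ u in (-π)..π, ((|Real.cos u| ^ a : ℝ) : ℂ) * (ek k u - (-1) ^ k)

lemma cos_rpow_int_complex {a : ℝ} (ha : -1 < a) (p q : ℝ) :
    IntervalIntegrable (fun u => ((|Real.cos u| ^ a : ℝ) : ℂ)) volume p q :=
  ⟨Integrable.ofReal (cos_rpow_intervalIntegrable ha p q).1,
    Integrable.ofReal (cos_rpow_intervalIntegrable ha p q).2⟩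

lemma lam_int {a : ℝ} (ha : -1 < a) (k : ℤ) (p q : ℝ) :
    IntervalIntegrable (fun u => ((|Real.cos u| ^ a : ℝ) : ℂ) * ek k u) volume p q :=
  (cos_rpow_int_complex ha p q).mul_continuousOn (ek_continuous k).continuousOn

lemma cos_mul_rpow_le {a : ℝ} (u : ℝ) :
    |Real.cos u| ^ a * |Real.cos u| ≤ |Real.cos u| ^ (a + 1) := by
  by_cases hv : Real.cos u = 0
  · simp only [hv, abs_zero, mul_zero]
    positivity
  · rw [Real.rpow_add_one (abs_ne_zero.2 hv)]

lemma mm_bound (a : ℝ) (k : ℤ) (u : ℝ) :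
    ‖((|Real.cos u| ^ a : ℝ) : ℂ) * (ek k u - (-1) ^ k)‖ ≤
      2 * |(k : ℝ)| * |Real.cos u| ^ (a + 1) := by
  have h0 : 0 ≤ |Real.cos u| ^ a := by positivity
  rw [norm_mul, Complex.norm_real, Real.norm_eq_abs, abs_of_nonneg h0]
  calc |Real.cos u| ^ a * ‖ek k u - (-1) ^ k‖
      ≤ |Real.cos u| ^ a * (2 * |(k : ℝ)| * |Real.cos u|) := by gcongr; exact ek_sub_bound k u
    _ = 2 * |(k : ℝ)| * (|Real.cos u| ^ a * |Real.cos u|) := by ring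
    _ ≤ _ := by gcongr; exact cos_mul_rpow_le u

lemma mm_meas (a : ℝ) (k : ℤ) :
    Measurable (fun u => ((|Real.cos u| ^ a : ℝ) : ℂ) * (ek k u - (-1) ^ k)) := by
  have := (ek_continuous k).measurable
  fun_prop

lemma mm_int {a : ℝ} (ha : -2 < a) (k : ℤ) (p q : ℝ) :
    IntervalIntegrable (fun u => ((|Real.cos u| ^ a : ℝ) : ℂ) * (ek k u - (-1) ^ k)) volume p q := by
  refine ((cos_rpow_intervalIntegrable (a := a + 1) (by linarith) p q).const_mul
    (2 * |(k : ℝ)|)).mono_fun (mm_meas a k).aestronglyMeasurable ?_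
  refine Filter.Eventually.of_forall fun u => ?_
  exact (mm_bound a k u).trans (le_abs_self _)

lemma ek_succ (k : ℤ) (u : ℝ) :
    ek (k + 1) u = ek k u * (Complex.exp (u * Complex.I) * Complex.exp (u * Complex.I)) := by
  rw [ek, ek, ← Complex.exp_add, ← Complex.exp_add]
  congr 1
  push_cast
  ring

lemma exp_mul_exp_neg (u : ℝ) :
    Complex.exp (u * Complex.I) * Complex.exp (-u * Complex.I) = 1 := by
  rw [← Complex.exp_add]
  simp

lemma hasDerivAt_E (k : ℤ) (u : ℝ) :
    HasDerivAt (fun u : ℝ => ek k u * Complex.exp (u * Complex.I))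
      ((2 * k + 1) * Complex.I * (ek k u * Complex.exp (u * Complex.I))) u := by
  have h : (fun u : ℝ => ek k u * Complex.exp (u * Complex.I)) =
      fun u : ℝ => Complex.exp ((2 * k + 1) * Complex.I * (u : ℂ)) := by
    ext v
    rw [ek, ← Complex.exp_add]
    congr 1
    ring
  have h' : ek k u * Complex.exp (u * Complex.I) =
      Complex.exp ((2 * k + 1) * Complex.I * (u : ℂ)) := congrFun h u
  rw [h, h']
  have := ((hasDerivAt_id (u : ℂ)).const_mul ((2 * k + 1) * Complex.I)).cexp.comp_ofReal
  refine this.congr_deriv ?_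
  simp [mul_comm]

lemma E_per (k : ℤ) : ek k π * Complex.exp ((π : ℝ) * Complex.I) =
    ek k (-π) * Complex.exp ((-π : ℝ) * Complex.I) := by
  have h : ek k (-π) * ek k π = 1 := by rw [← ek_add]; simp [ek]
  rw [ek_pi, mul_one] at h
  rw [ek_pi, h, Complex.exp_pi_mul_I]
  push_cast
  rw [neg_mul, Complex.exp_neg, Complex.exp_pi_mul_I]
  norm_num

/-- Obtained from `cos_parts` with `B = e^{(2k+1)iu}`. -/
lemma lam_rec {a : ℝ} (ha : -1 < a) (k : ℤ) :
    (a + 2 + 2 * k) * lam a (k + 1) + (2 * k - a) * lam a k = 0 := by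
  have hE : ∀ u : ℝ, ((|Real.cos u| ^ a : ℝ) : ℂ) *
      (-(a + 1) * (Real.sin u : ℝ) * (ek k u * Complex.exp (u * Complex.I)) + (Real.cos u : ℝ) *
        ((2 * k + 1) * Complex.I * (ek k u * Complex.exp (u * Complex.I)))) =
      (Complex.I / 2 * (a + 2 + 2 * k)) * (((|Real.cos u| ^ a : ℝ) : ℂ) * ek (k + 1) u) +
      (Complex.I / 2 * (2 * k - a)) * (((|Real.cos u| ^ a : ℝ) : ℂ) * ek k u) := by
    intro u
    rw [ek_succ, Complex.ofReal_sin, Complex.ofReal_cos, Complex.sin, Complex.cos]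
    linear_combination (((|Real.cos u| ^ a : ℝ) : ℂ) * ek k u * Complex.I / 2 * (2 * k - a)) *
      exp_mul_exp_neg u
  have h1 := (lam_int ha (k + 1) (-π) π).const_mul (Complex.I / 2 * (a + 2 + 2 * k))
  have h2 := (lam_int ha k (-π) π).const_mul (Complex.I / 2 * (2 * k - a))
  have h := cos_parts (a := a) (d := 0) (C := 1) (by linarith) (hasDerivAt_E k)
    (fun u => by rw [norm_mul, ek_norm, Complex.norm_exp_ofReal_mul_I]; simp) (E_per k)
    (by simp_rw [hE]; exact h1.add h2)
  simp_rw [hE] at h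
  rw [intervalIntegral.integral_add h1 h2, intervalIntegral.integral_const_mul,
    intervalIntegral.integral_const_mul] at h
  change _ * lam a (k + 1) + _ * lam a k = 0 at h
  linear_combination (-2 * Complex.I) * h +
    ((a + 2 + 2 * k) * lam a (k + 1) + (2 * k - a) * lam a k) * Complex.I_sq

/-- Obtained from `cos_parts` with `B = e^{(2k+1)iu} - i(-1)^k sin u`; the correction makes `B`
vanish at the zeros of `cos`. -/
lemma mm_rec {a : ℝ} (ha : -2 < a) (k : ℤ) :
    (a + 2 + 2 * k) * mm a (k + 1) + (2 * k - a) * mm a k =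
      2 * (-1) ^ k * (a + 2) * ((∫ u in (-π)..π, |Real.cos u| ^ (a + 2) : ℝ) : ℂ) := by
  have hσ : (-1 : ℂ) ^ (k + 1) = -(-1) ^ k := by
    rw [zpow_add₀ (by norm_num)]; simp
  set σ : ℂ := (-1) ^ k with hσdef
  have hσn : ‖σ‖ = 1 := neg_one_zpow_norm k
  have hc : ∀ u : ℝ, ((|Real.cos u| ^ (a + 2) : ℝ) : ℂ) =
      ((|Real.cos u| ^ a : ℝ) : ℂ) * ((Real.cos u : ℝ) : ℂ) ^ 2 := by
    intro u
    rw [← Complex.ofReal_pow, ← Complex.ofReal_mul]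
    congr 1
    by_cases hv : Real.cos u = 0
    · rw [hv, abs_zero, Real.zero_rpow (by linarith)]
      simp
    · rw [Real.rpow_add (abs_pos.2 hv), ← sq_abs (Real.cos u)]
      norm_num
  have hE : ∀ u : ℝ, ((|Real.cos u| ^ a : ℝ) : ℂ) *
      (-(a + 1) * (Real.sin u : ℝ) * (ek k u * Complex.exp (u * Complex.I) -
          Complex.I * σ * (Real.sin u : ℝ)) + (Real.cos u : ℝ) *
        ((2 * k + 1) * Complex.I * (ek k u * Complex.exp (u * Complex.I)) -
          Complex.I * σ * (Real.cos u : ℝ))) =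
      (Complex.I / 2 * (a + 2 + 2 * k)) *
        (((|Real.cos u| ^ a : ℝ) : ℂ) * (ek (k + 1) u - (-1) ^ (k + 1))) +
      (Complex.I / 2 * (2 * k - a)) * (((|Real.cos u| ^ a : ℝ) : ℂ) * (ek k u - σ)) -
      (Complex.I * σ * (a + 2)) * ((|Real.cos u| ^ (a + 2) : ℝ) : ℂ) := by
    intro u
    have hsc := Complex.sin_sq_add_cos_sq (u : ℂ)
    rw [ek_succ, hc, hσ, Complex.ofReal_sin, Complex.ofReal_cos]
    have hA : -(a + 1) * Complex.sin u * (ek k u * Complex.exp (u * Complex.I)) + Complex.cos u *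
        ((2 * k + 1) * Complex.I * (ek k u * Complex.exp (u * Complex.I))) =
      (Complex.I / 2 * (a + 2 + 2 * k)) *
        (ek k u * (Complex.exp (u * Complex.I) * Complex.exp (u * Complex.I))) +
      (Complex.I / 2 * (2 * k - a)) * ek k u := by
      rw [Complex.sin, Complex.cos]
      linear_combination (ek k u * Complex.I / 2 * (2 * k - a)) * exp_mul_exp_neg u
    linear_combination ((|Real.cos u| ^ a : ℝ) : ℂ) * hA +
      ((|Real.cos u| ^ a : ℝ) : ℂ) * (a + 1) * Complex.I * σ * hsc
  have hB : ∀ u : ℝ, HasDerivAt (fun u : ℝ => ek k u * Complex.exp (u * Complex.I) -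
          Complex.I * σ * (Real.sin u : ℝ))
        ((2 * k + 1) * Complex.I * (ek k u * Complex.exp (u * Complex.I)) -
          Complex.I * σ * (Real.cos u : ℝ)) u := fun u =>
    (hasDerivAt_E k u).sub ((Real.hasDerivAt_sin u).ofReal_comp.const_mul _)
  have hbd : ∀ u : ℝ, ‖ek k u * Complex.exp (u * Complex.I) - Complex.I * σ * (Real.sin u : ℝ)‖ ≤
      (2 * |(k : ℝ)| + 1) * |Real.cos u| ^ (1 : ℝ) := by
    intro u
    have e : ek k u * Complex.exp (u * Complex.I) - Complex.I * σ * (Real.sin u : ℝ) =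
        (ek k u - σ) * Complex.exp (u * Complex.I) + σ * (Real.cos u : ℝ) := by
      rw [Complex.exp_mul_I, Complex.ofReal_sin, Complex.ofReal_cos]
      ring
    rw [e, Real.rpow_one]
    refine (norm_add_le _ _).trans ?_
    rw [norm_mul, norm_mul, Complex.norm_exp_ofReal_mul_I, hσn, Complex.norm_real,
      Real.norm_eq_abs]
    have := ek_sub_bound k u
    linarith
  have h1 := (mm_int ha (k + 1) (-π) π).const_mul (Complex.I / 2 * (a + 2 + 2 * k))
  have h2 := (mm_int ha k (-π) π).const_mul (Complex.I / 2 * (2 * k - a))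
  have h3 : IntervalIntegrable (fun u : ℝ => (Complex.I * σ * (a + 2)) *
      ((|Real.cos u| ^ (a + 2) : ℝ) : ℂ)) volume (-π) π :=
    (cos_rpow_int_complex (a := a + 2) (by linarith) (-π) π).const_mul _
  have h := cos_parts (a := a) (d := 1) (by linarith) hB hbd
    (by rw [E_per]; simp) (by simp_rw [hE]; exact (h1.add h2).sub h3)
  -- Multiplying by `-2i` turns the factor `i/2` of `hE` into `1`.
  simp_rw [hE] at h
  rw [intervalIntegral.integral_sub (h1.add h2) h3, intervalIntegral.integral_add h1 h2,
    intervalIntegral.integral_const_mul, intervalIntegral.integral_const_mul,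
    intervalIntegral.integral_const_mul, intervalIntegral.integral_ofReal] at h
  change _ * mm a (k + 1) + _ * mm a k - _ = 0 at h
  linear_combination (-2 * Complex.I) * h +
    ((a + 2 + 2 * k) * mm a (k + 1) + (2 * k - a) * mm a k -
      2 * σ * (a + 2) * ((∫ u in (-π)..π, |Real.cos u| ^ (a + 2) : ℝ) : ℂ)) * Complex.I_sq

/-! ### Evaluation of the product of the multipliers -/

/-- The case `k = 0` of `tau_lam_mu`: duplication formula at `s/2`, reflection formula at
`(s+1)/2`. -/
lemma tau_lam_zero {s : ℝ} (hs0 : 0 < s) (hs1 : s < 1) :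
    tauC s * (cC s * ∫ u in (-π)..π, |Real.cos u| ^ (-s)) = 1 := by
  rw [cos_rpow_integral (by linarith), tauC, cC]
  have hd := Real.Gamma_mul_Gamma_add_half (s / 2)
  have hr := Real.Gamma_mul_Gamma_one_sub ((s + 1) / 2)
  rw [show π * ((s + 1) / 2) = s * π / 2 + π / 2 by ring, Real.sin_add_pi_div_two,
    show 1 - (s + 1) / 2 = (-s + 1) / 2 by ring] at hr
  rw [show s / 2 + 1 / 2 = (s + 1) / 2 by ring, show 2 * (s / 2) = s by ring,
    Real.rpow_sub two_pos, Real.rpow_one] at hd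
  rw [show (2 - s) / 2 = -s / 2 + 1 by ring, Real.mul_rpow two_pos.le Real.pi_pos.le,
    Real.rpow_neg two_pos.le, Real.rpow_neg Real.pi_pos.le, Real.rpow_sub_one Real.pi_pos.ne']
  have hg1 : 0 < Real.Gamma (s / 2) := Real.Gamma_pos_of_pos (by linarith)
  have hg2 : 0 < Real.Gamma (-s / 2 + 1) := Real.Gamma_pos_of_pos (by linarith)
  have hg3 : 0 < Real.Gamma ((s + 1) / 2) := Real.Gamma_pos_of_pos (by linarith)
  have hcos : 0 < Real.cos (s * π / 2) :=
    Real.cos_pos_of_mem_Ioo ⟨by nlinarith [Real.pi_pos], by nlinarith [Real.pi_pos]⟩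
  have hpi := Real.pi_pos
  have h2 : (0 : ℝ) < 2 ^ s := by positivity
  have hps : (0 : ℝ) < π ^ s := by positivity
  have hsq : 0 < √π := Real.sqrt_pos.2 hpi
  have e1 : Real.Gamma s = Real.Gamma (s / 2) * Real.Gamma ((s + 1) / 2) * 2 ^ s / (2 * √π) := by
    rw [hd]; field_simp
  have e2 : Real.Gamma ((-s + 1) / 2) =
      π / (Real.cos (s * π / 2) * Real.Gamma ((s + 1) / 2)) := by
    field_simp at hr ⊢
    linarith
  have hg2' : 0 < Real.Gamma ((-s + 2) / 2) := Real.Gamma_pos_of_pos (by linarith)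
  rw [e1, e2]
  field_simp

/-- The relation that makes the recurrence for `mu` homogeneous: it cancels the right-hand side of
`mm_rec` against the contribution of `c_s`. -/
lemma tau_two_sub {s : ℝ} (hs0 : 0 < s) (hs1 : s < 1) :
    tauC (2 - s) * (s * ∫ u in (-π)..π, |Real.cos u| ^ s) = -(1 - s) * cC s := by
  rw [cos_rpow_integral (by linarith), tauC, cC]
  have hd := Real.Gamma_mul_Gamma_add_half ((1 - s) / 2)
  have hr := Real.Gamma_mul_Gamma_one_sub ((s + 1) / 2)
  rw [show π * ((s + 1) / 2) = s * π / 2 + π / 2 by ring, Real.sin_add_pi_div_two,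
    show 1 - (s + 1) / 2 = (1 - s) / 2 by ring] at hr
  rw [show (1 - s) / 2 + 1 / 2 = (2 - s) / 2 by ring, show 2 * ((1 - s) / 2) = 1 - s by ring,
    show 1 - (1 - s) = s by ring] at hd
  have hcs : Real.cos ((2 - s) * π / 2) = -Real.cos (s * π / 2) := by
    rw [show (2 - s) * π / 2 = π - s * π / 2 by ring, Real.cos_pi_sub]
  have hG1 : Real.Gamma (2 - s) = (1 - s) * Real.Gamma (1 - s) := by
    rw [show 2 - s = (1 - s) + 1 by ring, Real.Gamma_add_one (by linarith)]
  have hG2 : Real.Gamma (s / 2 + 1) = s / 2 * Real.Gamma (s / 2) :=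
    Real.Gamma_add_one (by linarith)
  rw [hcs, hG1, hG2, show -(2 - s) = s - 1 - 1 by ring, Real.mul_rpow two_pos.le Real.pi_pos.le,
    Real.rpow_sub_one two_ne_zero, Real.rpow_sub_one two_ne_zero,
    Real.rpow_sub_one Real.pi_pos.ne' (s - 1)]
  have hg1 : 0 < Real.Gamma (s / 2) := Real.Gamma_pos_of_pos (by linarith)
  have hg2 : 0 < Real.Gamma ((1 - s) / 2) := Real.Gamma_pos_of_pos (by linarith)
  have hg3 : 0 < Real.Gamma ((s + 1) / 2) := Real.Gamma_pos_of_pos (by linarith)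
  have hcos : 0 < Real.cos (s * π / 2) :=
    Real.cos_pos_of_mem_Ioo ⟨by nlinarith [Real.pi_pos], by nlinarith [Real.pi_pos]⟩
  have hpi := Real.pi_pos
  have h2 : (0 : ℝ) < 2 ^ s := by positivity
  have hps : (0 : ℝ) < π ^ (s - 1) := by positivity
  have hsq : 0 < √π := Real.sqrt_pos.2 hpi
  have e1 : Real.Gamma (1 - s) =
      Real.Gamma ((1 - s) / 2) * Real.Gamma ((2 - s) / 2) / (2 ^ s * √π) := by
    rw [hd]; field_simp
  have e2 : Real.Gamma ((1 - s) / 2) =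
      π / (Real.cos (s * π / 2) * Real.Gamma ((s + 1) / 2)) := by
    field_simp at hr ⊢
    linarith
  rw [e1, e2]
  field_simp

/-- The multiplier of `Ω ↦ Ω̃` on `e^{2iku}`. -/
def mu (s : ℝ) (k : ℤ) : ℂ := tauC (2 - s) * mm (-2 + s) k + cC s * (-1) ^ k

lemma mu_rec {s : ℝ} (hs0 : 0 < s) (hs1 : s < 1) (k : ℤ) :
    (s + 2 * k) * mu s (k + 1) + (2 * k + 2 - s) * mu s k = 0 := by
  have h := mm_rec (a := -2 + s) (by linarith) k
  have ht : (tauC (2 - s) : ℂ) * (s * ((∫ u in (-π)..π, |Real.cos u| ^ s : ℝ) : ℂ)) =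
      -(1 - s) * cC s := by exact_mod_cast tau_two_sub hs0 hs1
  rw [show -2 + s + 2 = s by ring] at h
  have hσ : (-1 : ℂ) ^ (k + 1) = -(-1) ^ k := by
    rw [zpow_add₀ (by norm_num)]; simp
  rw [mu, mu, hσ]
  push_cast at h
  linear_combination (tauC (2 - s) : ℂ) * h + 2 * (-1) ^ k * ht

lemma mu_zero (s : ℝ) : mu s 0 = cC s := by
  simp [mu, mm, ek]

/-- The product of the two multipliers does not depend on `k`, since their recurrences in `k`
are inverse to each other. -/
lemma lam_mul_mu {s : ℝ} (hs0 : 0 < s) (hs1 : s < 1) (k : ℤ) :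
    lam (-s) k * mu s k = lam (-s) 0 * mu s 0 := by
  have hne : ∀ k : ℤ, (s + 2 * k : ℂ) ≠ 0 ∧ (2 - s + 2 * k : ℂ) ≠ 0 := by
    intro k
    constructor
    · intro h
      have h' : s + 2 * k = 0 := by exact_mod_cast h
      have h1 : (-1 : ℝ) < k := by linarith
      have h2 : (k : ℝ) < 0 := by linarith
      have h3 : -1 < k := by exact_mod_cast h1
      have h4 : k < 0 := by exact_mod_cast h2
      omega
    · intro h
      have h' : 2 - s + 2 * k = 0 := by exact_mod_cast h
      have h1 : (-1 : ℝ) < k := by linarith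
      have h2 : (k : ℝ) < 0 := by linarith
      have h3 : -1 < k := by exact_mod_cast h1
      have h4 : k < 0 := by exact_mod_cast h2
      omega
  have hstep : ∀ k : ℤ, lam (-s) (k + 1) * mu s (k + 1) = lam (-s) k * mu s k := by
    intro k
    have h1 := lam_rec (a := -s) (by linarith) k
    have h2 := mu_rec hs0 hs1 k
    push_cast at h1
    apply mul_left_cancel₀ (mul_ne_zero (hne k).1 (hne k).2)
    linear_combination ((s + 2 * k) * mu s (k + 1)) * h1 - ((2 * k + s) * lam (-s) k) * h2
  induction k using Int.induction_on with
  | zero => rfl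
  | succ n ih => rw [hstep, ih]
  | pred n ih =>
    rw [← ih, ← hstep (-(n : ℤ) - 1)]
    simp

/-- The two multipliers are inverse to each other up to the constant `τ_s`. -/
lemma tau_lam_mu {s : ℝ} (hs0 : 0 < s) (hs1 : s < 1) (k : ℤ) :
    (tauC s : ℂ) * (lam (-s) k * mu s k) = 1 := by
  have hl : lam (-s) 0 = ((∫ u in (-π)..π, |Real.cos u| ^ (-s) : ℝ) : ℂ) := by
    rw [lam, ← intervalIntegral.integral_ofReal]
    simp [ek]
  rw [lam_mul_mu hs0 hs1, mu_zero, hl, mul_comm _ (cC s : ℂ)]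
  exact_mod_cast tau_lam_zero hs0 hs1

lemma mu_bound {s : ℝ} (hs0 : 0 < s) :
    ∃ K : ℝ, ∀ k : ℤ, ‖mu s k‖ ≤ K * (1 + |(k : ℝ)|) := by
  set J : ℝ := ∫ u in (-π)..π, |Real.cos u| ^ (-2 + s + 1) with hJ
  have hm : ∀ k : ℤ, ‖mm (-2 + s) k‖ ≤ 2 * |(k : ℝ)| * J := by
    intro k
    rw [mm, hJ, ← intervalIntegral.integral_const_mul]
    exact intervalIntegral.norm_integral_le_of_norm_le (by linarith [Real.pi_pos])
      (Filter.Eventually.of_forall fun u _ => mm_bound _ k u)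
      ((cos_rpow_intervalIntegrable (by linarith) _ _).const_mul _)
  refine ⟨|tauC (2 - s)| * (2 * |J|) + |cC s|, fun k => ?_⟩
  rw [mu]
  refine (norm_add_le _ _).trans ?_
  rw [norm_mul, norm_mul, neg_one_zpow_norm, Complex.norm_real, Complex.norm_real,
    Real.norm_eq_abs, Real.norm_eq_abs]
  have h1 : ‖mm (-2 + s) k‖ ≤ 2 * |J| * (1 + |(k : ℝ)|) := by
    have := hm k
    have h3 := mul_le_mul_of_nonneg_left (le_abs_self J) (abs_nonneg (k : ℝ))
    have h4 := abs_nonneg J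
    linarith
  have h2 := mul_le_mul_of_nonneg_left h1 (abs_nonneg (tauC (2 - s)))
  have h3 := mul_nonneg (abs_nonneg (cC s)) (abs_nonneg (k : ℝ))
  linarith

/-! ### Fourier series of smooth periodic functions -/

/-- The `k`-th Fourier coefficient of a `π`-periodic function `g`, with respect to `e^{2iku}`. -/
def cf (g : ℝ → ℝ) (k : ℤ) : ℂ := (1 / π : ℂ) * ∫ u in (0 : ℝ)..π, ek (-k) u * (g u : ℂ)

lemma hasDerivAt_ek (k : ℤ) (u : ℝ) : HasDerivAt (ek k) (2 * k * Complex.I * ek k u) u := by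
  have h : ek k = fun u : ℝ => Complex.exp (2 * k * Complex.I * (u : ℂ)) := by
    ext v
    rw [ek]
    congr 1
    ring
  rw [h]
  have := ((hasDerivAt_id (u : ℂ)).const_mul (2 * k * Complex.I)).cexp.comp_ofReal
  refine this.congr_deriv ?_
  simp [mul_comm]

lemma cf_deriv {g : ℝ → ℝ} (hg : ContDiff ℝ (⊤ : ℕ∞) g) (hp : Function.Periodic g π) (k : ℤ) :
    ‖cf g k‖ * (2 * |(k : ℝ)|) = ‖cf (deriv g) k‖ := by
  have hg' : Continuous (deriv g) := hg.continuous_deriv (by simp)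
  have hd : ∀ u, HasDerivAt (fun u => (g u : ℂ)) ((deriv g u : ℝ) : ℂ) u := fun u =>
    ((hg.differentiable (by simp)).differentiableAt.hasDerivAt).ofReal_comp
  have h := intervalIntegral.integral_mul_deriv_eq_deriv_mul (a := 0) (b := π)
    (u := ek (-k)) (v := fun u => (g u : ℂ)) (fun u _ => hasDerivAt_ek (-k) u)
    (fun u _ => hd u)
    ((continuous_const.mul (ek_continuous (-k))).intervalIntegrable _ _)
    ((Complex.continuous_ofReal.comp hg').intervalIntegrable _ _)
  have hb : g π = g 0 := by simpa using hp 0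
  have h0 : ek (-k) 0 = 1 := by simp [ek]
  rw [ek_pi, h0, hb, sub_self, zero_sub] at h
  simp_rw [mul_assoc (2 * ((-k : ℤ) : ℂ) * Complex.I)] at h
  rw [intervalIntegral.integral_const_mul] at h
  have h2 : cf (deriv g) k = (2 * k * Complex.I) * cf g k := by
    rw [cf, cf, h]
    push_cast
    ring
  rw [h2]
  simp
  ring

lemma cf_bound (g : ℝ → ℝ) : ∃ M : ℝ, ∀ k : ℤ, ‖cf g k‖ ≤ M := by
  refine ⟨‖(1 / π : ℂ)‖ * ∫ u in (0 : ℝ)..π, ‖(g u : ℂ)‖, fun k => ?_⟩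
  rw [cf, norm_mul]
  gcongr
  refine (intervalIntegral.norm_integral_le_integral_norm Real.pi_pos.le).trans_eq ?_
  simp [ek_norm]

lemma periodic_deriv {g : ℝ → ℝ} (hp : Function.Periodic g π) :
    Function.Periodic (deriv g) π := by
  intro u
  rw [← deriv_comp_add_const]
  congr 1
  exact funext hp

/-- The Fourier coefficients of a smooth function decay like `|k|^{-3}`, which leaves room for the
linear growth of the multiplier `mu`. -/
lemma cf_summable {g : ℝ → ℝ} (hg : ContDiff ℝ (⊤ : ℕ∞) g) (hp : Function.Periodic g π) :
    Summable fun k : ℤ => ‖cf g k‖ * (1 + |(k : ℝ)|) := by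
  have hd := fun (f : ℝ → ℝ) (hf : ContDiff ℝ (⊤ : ℕ∞) f) => (contDiff_infty_iff_deriv.1 hf).2
  have g1 := hd _ hg
  have g2 := hd _ g1
  have p1 := periodic_deriv hp
  have p2 := periodic_deriv p1
  obtain ⟨M, hM⟩ := cf_bound (deriv (deriv (deriv g)))
  have hs : Summable fun k : ℤ => M / 4 * (1 / (k : ℝ) ^ 2) :=
    (Real.summable_one_div_int_pow.2 one_lt_two).mul_left _
  refine Summable.of_norm_bounded_eventually hs ?_
  have hf : {k : ℤ | k = 0}.Finite := by simp
  refine Filter.mem_of_superset hf.compl_mem_cofinite ?_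
  intro k hk
  have hk0 : k ≠ 0 := hk
  have hk1 : (1 : ℝ) ≤ |(k : ℝ)| := by exact_mod_cast Int.one_le_abs hk0
  have e := hM k
  rw [← cf_deriv g2 p2, ← cf_deriv g1 p1, ← cf_deriv hg hp] at e
  have h0 := norm_nonneg (cf g k)
  simp only [Set.mem_ofPred_eq]
  rw [Real.norm_of_nonneg (by positivity), ← sq_abs, mul_one_div, le_div_iff₀ (by positivity)]
  have h3 : ‖cf g k‖ * (1 + |(k : ℝ)|) * |(k : ℝ)| ^ 2 ≤
      ‖cf g k‖ * (|(k : ℝ)| + |(k : ℝ)|) * |(k : ℝ)| ^ 2 := by gcongr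
  linarith

lemma fourier_eq_ek (k : ℤ) (u : ℝ) : fourier k (u : AddCircle π) = ek k u := by
  rw [fourier_coe_apply, ek]
  congr 1
  have : (π : ℂ) ≠ 0 := by exact_mod_cast Real.pi_ne_zero
  field_simp

lemma cf_hasSum {g : ℝ → ℝ} (hg : ContDiff ℝ (⊤ : ℕ∞) g) (hp : Function.Periodic g π) (θ : ℝ) :
    HasSum (fun k : ℤ => cf g k * ek k θ) ((g θ : ℝ) : ℂ) := by
  have : Fact (0 < π) := ⟨Real.pi_pos⟩
  have hp' : Function.Periodic (fun u => (g u : ℂ)) π := fun u => by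
    change ((g (u + π) : ℝ) : ℂ) = _
    rw [hp u]
  let F : C(AddCircle π, ℂ) := ⟨hp'.lift, by
    refine continuous_coinduced_dom.2 ?_
    exact Complex.continuous_ofReal.comp hg.continuous⟩
  have hF : ∀ u : ℝ, F (u : AddCircle π) = (g u : ℂ) := fun u => hp'.lift_coe u
  have hc : ∀ k : ℤ, fourierCoeff F k = cf g k := by
    intro k
    rw [fourierCoeff_eq_intervalIntegral _ _ 0, cf, zero_add]
    simp_rw [hF, fourier_eq_ek, smul_eq_mul]
    rw [Complex.real_smul]
    push_cast
    rfl
  have hs : Summable (fourierCoeff F) := by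
    refine Summable.of_norm_bounded (cf_summable hg hp) fun k => ?_
    rw [hc]
    have := mul_nonneg (norm_nonneg (cf g k)) (abs_nonneg (k : ℝ))
    linarith
  have := has_pointwise_sum_fourier_series_of_summable hs (θ : AddCircle π)
  simp_rw [hF, hc, fourier_eq_ek, smul_eq_mul] at this
  exact this

/-! ### Fourier expansion of the transform -/

lemma integral_shift {E : Type*} [NormedAddCommGroup E] [NormedSpace ℝ E] {f : ℝ → E}
    (hf : Function.Periodic f (2 * π)) (φ : ℝ) :
    ∫ θ in (-π)..π, f θ = ∫ u in (-π)..π, f (φ + u) := by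
  rw [intervalIntegral.integral_comp_add_left]
  have := hf.intervalIntegral_add_eq (-π) (φ + -π)
  rwa [show -π + 2 * π = π by ring, show φ + -π + 2 * π = φ + π by ring] at this

lemma cos_rpow_two_periodic (a φ : ℝ) :
    Function.Periodic (fun θ : ℝ => |Real.cos (φ - θ)| ^ a) (2 * π) := by
  intro θ
  simp only
  rw [show φ - (θ + 2 * π) = φ - θ - 2 * π by ring, Real.cos_sub_two_pi]

/-- Fourier expansion of `Ω̃`: the transform multiplies the `k`-th coefficient by `mu s k`. -/
lemma Omt_hasSum {s : ℝ} (hs0 : 0 < s) {Ω : ℝ → ℝ} (hg : ContDiff ℝ (⊤ : ℕ∞) Ω)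
    (hp : Function.Periodic Ω π) (φ : ℝ) :
    HasSum (fun k : ℤ => cf Ω k * mu s k * ek k φ) ((Omt s Ω φ : ℝ) : ℂ) := by
  have hp2 : Function.Periodic Ω (2 * π) := by simpa using hp.nat_mul 2
  have hΩ := cf_hasSum hg hp
  have hS := cf_summable hg hp
  have hcos := cos_rpow_intervalIntegrable (a := -2 + s + 1) (by linarith) (-π) π
  have h1 := intervalIntegral.hasSum_integral_of_dominated_convergence
    (μ := volume) (a := -π) (b := π)
    (F := fun (k : ℤ) u => cf Ω k * ek k φ * (((|Real.cos u| ^ (-2 + s) : ℝ) : ℂ) *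
      (ek k u - (-1) ^ k)))
    (f := fun u => ((|Real.cos u| ^ (-2 + s) * (Ω (φ + u) - Ω (φ + π / 2)) : ℝ) : ℂ))
    (fun k u => ‖cf Ω k‖ * (1 + |(k : ℝ)|) * (2 * |Real.cos u| ^ (-2 + s + 1)))
    (fun k => ((mm_meas (-2 + s) k).const_mul _).aestronglyMeasurable)
    (fun k => Filter.Eventually.of_forall fun u _ => by
      rw [norm_mul, norm_mul, ek_norm, mul_one, mul_assoc]
      refine mul_le_mul_of_nonneg_left ((mm_bound _ k u).trans ?_) (norm_nonneg _)
      have : 0 ≤ |Real.cos u| ^ (-2 + s + 1) := by positivity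
      linarith)
    (Filter.Eventually.of_forall fun u _ => hS.mul_right _)
    (by
      simp_rw [tsum_mul_right]
      exact (hcos.const_mul 2).const_mul _)
    (Filter.Eventually.of_forall fun u _ => by
      have h := ((hΩ (φ + u)).sub (hΩ (φ + π / 2))).mul_left
        ((|Real.cos u| ^ (-2 + s) : ℝ) : ℂ)
      push_cast at h ⊢
      refine h.congr_fun fun k => ?_
      rw [ek_add, ek_add, ek_pi_div_two]
      ring)
  simp_rw [intervalIntegral.integral_const_mul] at h1
  rw [intervalIntegral.integral_ofReal] at h1
  have hsh : ∫ θ in (-π)..π, |Real.cos (φ - θ)| ^ (-2 + s) * (Ω θ - Ω (φ + π / 2)) =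
      ∫ u in (-π)..π, |Real.cos u| ^ (-2 + s) * (Ω (φ + u) - Ω (φ + π / 2)) := by
    rw [integral_shift (fun θ => ?_) φ]
    · simp
    · have := cos_rpow_two_periodic (-2 + s) φ θ
      simp only at this ⊢
      rw [this, hp2 θ]
  rw [Omt, hsh]
  have h2 := (h1.mul_left (tauC (2 - s) : ℂ)).add ((hΩ (φ + π / 2)).mul_left (cC s : ℂ))
  push_cast at h2 ⊢
  refine h2.congr_fun fun k => ?_
  change _ = _ * (_ * mm (-2 + s) k) + _
  rw [mu, ek_add, ek_pi_div_two]
  ring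

lemma lam_shift (a α : ℝ) (k : ℤ) :
    ∫ φ in (-π)..π, ((|Real.cos (α - φ)| ^ a : ℝ) : ℂ) * ek k φ = lam a k * ek k α := by
  rw [integral_shift (fun φ => ?_) α, lam, ← intervalIntegral.integral_mul_const]
  · simp only [sub_add_cancel_left, Real.cos_neg, ek_add]
    congr 1
    ext u
    ring
  · have := cos_rpow_two_periodic a α φ
    simp only at this ⊢
    rw [this, show φ + 2 * π = φ + π + π by ring, ek_add, ek_add, ek_pi, mul_one, mul_one]

/-- The identity on the unit circle. -/
lemma circle_identity {s : ℝ} (hs0 : 0 < s) (hs1 : s < 1) {Ω : ℝ → ℝ}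
    (hg : ContDiff ℝ (⊤ : ℕ∞) Ω) (hp : Function.Periodic Ω π) (α : ℝ) :
    Ω α = tauC s * ∫ φ in (-π)..π, |Real.cos (α - φ)| ^ (-s) * Omt s Ω φ := by
  have hO := Omt_hasSum hs0 hg hp
  have hS := cf_summable hg hp
  obtain ⟨K, hK⟩ := mu_bound hs0
  have hS' : Summable fun k : ℤ => ‖cf Ω k * mu s k‖ := by
    refine Summable.of_nonneg_of_le (fun _ => norm_nonneg _) (fun k => ?_) (hS.mul_left K)
    rw [norm_mul]
    have := mul_le_mul_of_nonneg_left (hK k) (norm_nonneg (cf Ω k))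
    linarith
  have hcos : IntervalIntegrable (fun φ => |Real.cos (α - φ)| ^ (-s)) volume (-π) π := by
    have := (cos_rpow_intervalIntegrable (a := -s) (by linarith) (α + π) (α - π)).comp_sub_left α
    simpa using this
  have h1 := intervalIntegral.hasSum_integral_of_dominated_convergence
    (μ := volume) (a := -π) (b := π)
    (F := fun (k : ℤ) φ => cf Ω k * mu s k * (((|Real.cos (α - φ)| ^ (-s) : ℝ) : ℂ) * ek k φ))
    (f := fun φ => ((|Real.cos (α - φ)| ^ (-s) * Omt s Ω φ : ℝ) : ℂ))
    (fun k φ => ‖cf Ω k * mu s k‖ * |Real.cos (α - φ)| ^ (-s))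
    (fun k => by
      have := (ek_continuous k).measurable
      refine Measurable.aestronglyMeasurable ?_
      fun_prop)
    (fun k => Filter.Eventually.of_forall fun φ _ => by
      rw [norm_mul, norm_mul _ (ek k φ), ek_norm, mul_one, Complex.norm_real,
        Real.norm_of_nonneg (by positivity)])
    (Filter.Eventually.of_forall fun u _ => hS'.mul_right _)
    (by
      simp_rw [tsum_mul_right]
      exact hcos.const_mul _)
    (Filter.Eventually.of_forall fun φ _ => by
      have h := (hO φ).mul_left ((|Real.cos (α - φ)| ^ (-s) : ℝ) : ℂ)
      push_cast at h ⊢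
      refine h.congr_fun fun k => ?_
      ring)
  simp_rw [intervalIntegral.integral_const_mul, lam_shift] at h1
  rw [intervalIntegral.integral_ofReal] at h1
  have h2 := h1.mul_left (tauC s : ℂ)
  have h3 : HasSum (fun k : ℤ => cf Ω k * ek k α) ((tauC s : ℂ) *
      ((∫ φ in (-π)..π, |Real.cos (α - φ)| ^ (-s) * Omt s Ω φ : ℝ) : ℂ)) := by
    refine h2.congr_fun fun k => ?_
    linear_combination (-cf Ω k * ek k α) * tau_lam_mu hs0 hs1 k
  exact_mod_cast (cf_hasSum hg hp α).unique h3

lemma polar {x : ℝ × ℝ} (hx : x ≠ 0) :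
    0 < nrm x ∧ x.1 = nrm x * Real.cos (ang x) ∧ x.2 = nrm x * Real.sin (ang x) := by
  set z : ℂ := ⟨x.1, x.2⟩ with hz
  have hz0 : z ≠ 0 := by
    intro h
    apply hx
    have h1 := congrArg Complex.re h
    have h2 := congrArg Complex.im h
    exact Prod.ext h1 h2
  have hn : nrm x = ‖z‖ := by
    rw [nrm, Complex.norm_def, Complex.normSq_apply]
    congr 1
    ring
  have hc : Real.cos (ang x) = Real.cos z.arg ∧ Real.sin (ang x) = Real.sin z.arg := by
    rw [ang]
    split_ifs with h
    · rw [hz, h]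
      simp
    · exact ⟨rfl, rfl⟩
  rw [hc.1, hc.2, hn]
  exact ⟨norm_pos_iff.2 hz0, (Complex.norm_mul_cos_arg z).symm, (Complex.norm_mul_sin_arg z).symm⟩

/-- decomposition of `|x|^{-s} Ω(θ(x))` into rotated one-dimensional
Riesz potentials: `|x|^{-s} Ω(θ(x)) = τ_s ∫_{-π}^{π} |x · e_φ|^{-s} Ω̃(φ) dφ`. -/
theorem statement1 (s : ℝ) (hs0 : 0 < s) (hs1 : s < 1) (Ω : ℝ → ℝ) (hΩ : SatisfiesH Ω)
    (x : ℝ × ℝ) (hx : x ≠ 0) :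
    nrm x ^ (-s) * Ω (ang x) =
      tauC s * ∫ φ in (-π)..π, |x.1 * Real.cos φ + x.2 * Real.sin φ| ^ (-s) * Omt s Ω φ := by
  obtain ⟨hr, h1, h2⟩ := polar hx
  have hp : Function.Periodic Ω π := hΩ.2.2.2
  have hE : ∀ φ : ℝ, |x.1 * Real.cos φ + x.2 * Real.sin φ| ^ (-s) * Omt s Ω φ =
      nrm x ^ (-s) * (|Real.cos (ang x - φ)| ^ (-s) * Omt s Ω φ) := by
    intro φ
    have e : x.1 * Real.cos φ + x.2 * Real.sin φ = nrm x * Real.cos (ang x - φ) := by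
      rw [Real.cos_sub, mul_add, ← mul_assoc, ← mul_assoc, ← h1, ← h2]
    rw [e, abs_mul, abs_of_pos hr, Real.mul_rpow hr.le (abs_nonneg _), mul_assoc]
  simp_rw [hE]
  rw [intervalIntegral.integral_const_mul, circle_identity hs0 hs1 hΩ.1 hp (ang x)]
  ring

end Aniso
end
end
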